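/- arXiv:1503.05302 — 5 statements merged into one kernel-verified Lean document; each statement's English description precedes it below -/
import Mathlib

section
/- Let d ≥ 2 and 0 < β < α < 2, and let D ⊂ ℝ^d be a bounded open set. Let G : {(x,y) ∈ D×D : x ≠ y} → [0,∞) be such that x ↦ G(x,y) is twice continuously differentiable on D∖{y} for each y ∈ D, extended by 0 outside D×D, and suppose there are constants c₀, c₂ > 0 such that for all x ≠ y in D and 1 ≤ i,j ≤ d: (a) G(x,y) ≤ c₀ |x−y|^{α−d} min(1, δ_D(x)/|x−y|)^{α/2} min(1, δ_D(y)/|x−y|)^{α/2}; (b) |∂²_{x_i x_j} G(x,y)| ≤ c₂ |x−y|^{α−d−2} min(1, δ_D(y)/|x−y|)^{α/2} max(1, |x−y|/δ_D(x))^{2−α/2}. Let b : ℝ^d × ℝ^d → ℝ be bounded and measurable. For x ≠ y in D set λ := min(δ_D(x), |x−y|)/2 and define |𝒮^b_x|G(x,y) := 𝒜(d,−β)·[ ∫_{|z|≤λ} |G(x+z,y) − G(x,y) − ∇_x G(x,y)·z|·|b(x,z)|·|z|^{−d−β} dz + ∫_{|z|>λ} (G(x+z,y) + G(x,y))·|b(x,z)|·|z|^{−d−β}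 dz ]. Then there exists a constant C = C(d, α, β, c₀, c₂) > 0 such that |𝒮^b_x|G(x,y) ≤ C ‖b‖_∞ h_D(x,y) for all x ≠ y in D. -/
open MeasureTheory Metric Set

noncomputable section

/-- distance to the boundary `∂D` -/
def deltaD {d : ℕ} (D : Set (EuclideanSpace ℝ (Fin d))) (x : EuclideanSpace ℝ (Fin d)) : ℝ :=
  Metric.infDist x (frontier D)

/-- `𝒜(d, -γ)`, the normalizing constant of the fractional Laplacian `Δ^{γ/2}` on `ℝ^d`. -/
def stableConst (d : ℕ) (γ : ℝ) : ℝ :=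
  γ * 2 ^ (γ - 1) * Real.pi ^ (-(d : ℝ) / 2) * Real.Gamma (((d : ℝ) + γ) / 2) *
    (Real.Gamma (1 - γ / 2))⁻¹

/-- the kernel `h_D(x,y)` -/
def hKer {d : ℕ} (α β : ℝ) (D : Set (EuclideanSpace ℝ (Fin d)))
    (x y : EuclideanSpace ℝ (Fin d)) : ℝ :=
  if 2 * β < α then
    ‖x - y‖ ^ (α - β - (d : ℝ)) * min 1 (deltaD D y / ‖x - y‖) ^ (α / 2)
  else if α = 2 * β then
    ‖x - y‖ ^ (β - (d : ℝ)) * min 1 (deltaD D y / ‖x - y‖) ^ β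
      * max 1 (Real.log (‖x - y‖ / deltaD D x))
  else
    ‖x - y‖ ^ (α - β - (d : ℝ)) * min 1 (deltaD D y / ‖x - y‖) ^ (α / 2)
      * max 1 (‖x - y‖ / deltaD D x) ^ (β - α / 2)

/-- radial power function `t^(q-d)` cut off to `S` -/
def radI (d : ℕ) (S : Set ℝ) (q : ℝ) (z : EuclideanSpace ℝ (Fin d)) : ℝ :=
  S.indicator (fun t : ℝ => t ^ (q - (d : ℝ))) ‖z‖

/-- surface constant -/
def radK (d : ℕ) : ℝ := d * volume.real (ball (0 : EuclideanSpace ℝ (Fin d)) 1)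

lemma radK_nonneg (d : ℕ) : 0 ≤ radK d := by
  unfold radK; positivity

lemma radI_nonneg (d : ℕ) (S : Set ℝ) (q : ℝ) (z : EuclideanSpace ℝ (Fin d)) :
    0 ≤ radI d S q z := by
  unfold radI
  refine Set.indicator_apply_nonneg fun _ => ?_
  positivity

lemma radI_mem {d : ℕ} {S : Set ℝ} {q : ℝ} {z : EuclideanSpace ℝ (Fin d)} (h : ‖z‖ ∈ S) :
    radI d S q z = ‖z‖ ^ (q - (d : ℝ)) := by
  unfold radI
  rw [Set.indicator_of_mem h]

lemma rad_aux (d : ℕ) (hd : 2 ≤ d) (S : Set ℝ) (q t : ℝ) (ht : t ∈ Ioi (0 : ℝ)) :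
    t ^ (d - 1) • S.indicator (fun t : ℝ => t ^ (q - (d : ℝ))) t
      = S.indicator (fun t : ℝ => t ^ (q - 1)) t := by
  by_cases h : t ∈ S
  · simp only [Set.indicator_of_mem h, smul_eq_mul]
    rw [← Real.rpow_natCast, ← Real.rpow_add ht]
    congr 1
    rw [Nat.cast_sub (by omega)]
    push_cast; ring
  · simp [h]

lemma rad_int (d : ℕ) (hd : 2 ≤ d) (S : Set ℝ) (hS : MeasurableSet S) (_hS0 : S ⊆ Ioi 0) (q : ℝ)
    (h : IntegrableOn (fun t : ℝ => t ^ (q - 1)) S) : Integrable (radI d S q) := by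
  have : Nonempty (Fin d) := ⟨⟨0, by omega⟩⟩
  have := (integrable_fun_norm_addHaar (volume : Measure (EuclideanSpace ℝ (Fin d)))
    (f := S.indicator (fun t : ℝ => t ^ (q - (d : ℝ))))).2
  refine this ?_
  rw [finrank_euclideanSpace_fin]
  rw [integrableOn_congr_fun (fun t ht => rad_aux d hd S q t ht) measurableSet_Ioi]
  exact ((integrable_indicator_iff hS).2 h).integrableOn

lemma rad_eq (d : ℕ) (hd : 2 ≤ d) (S : Set ℝ) (hS : MeasurableSet S) (hS0 : S ⊆ Ioi 0) (q : ℝ) :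
    ∫ z, radI d S q z = radK d * ∫ t in S, t ^ (q - 1) := by
  have : Nonempty (Fin d) := ⟨⟨0, by omega⟩⟩
  have := (integral_fun_norm_addHaar (volume : Measure (EuclideanSpace ℝ (Fin d)))
    (S.indicator (fun t : ℝ => t ^ (q - (d : ℝ)))))
  unfold radI
  rw [this, finrank_euclideanSpace_fin]
  rw [setIntegral_congr_fun measurableSet_Ioi (fun t ht => rad_aux d hd S q t ht)]
  rw [setIntegral_indicator hS, inter_eq_self_of_subset_right hS0]
  simp [radK, mul_assoc]

lemma rad1 (d : ℕ) (hd : 2 ≤ d) (q R : ℝ) (hq : 0 < q) (hR : 0 < R) :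
    Integrable (radI d (Ioc 0 R) q) ∧ ∫ z, radI d (Ioc 0 R) q z = radK d * (R ^ q / q) := by
  constructor
  · refine rad_int d hd _ measurableSet_Ioc (fun t ht => ht.1) q ?_
    rw [← intervalIntegrable_iff_integrableOn_Ioc_of_le hR.le]
    exact intervalIntegral.intervalIntegrable_rpow' (by linarith)
  · rw [rad_eq d hd _ measurableSet_Ioc (fun t ht => ht.1) q,
      ← intervalIntegral.integral_of_le hR.le, integral_rpow (Or.inl (by linarith))]
    simp [Real.zero_rpow hq.ne']

lemma rad2 (d : ℕ) (hd : 2 ≤ d) (q R : ℝ) (hq : 0 < q) (hR : 0 < R) :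
    Integrable (radI d (Ioi R) (-q)) ∧ ∫ z, radI d (Ioi R) (-q) z = radK d * (R ^ (-q) / q) := by
  constructor
  · refine rad_int d hd _ measurableSet_Ioi (fun t ht => hR.trans ht) _ ?_
    exact integrableOn_Ioi_rpow_of_lt (by linarith) hR
  · rw [rad_eq d hd _ measurableSet_Ioi (fun t ht => hR.trans ht) _,
      integral_Ioi_rpow_of_lt (by linarith) hR]
    simp [neg_div_neg_eq]

lemma rad3 (d : ℕ) (hd : 2 ≤ d) (a R : ℝ) (ha : 0 < a) (hR : a ≤ R) :
    Integrable (radI d (Ioc a R) 0) ∧ ∫ z, radI d (Ioc a R) 0 z = radK d * Real.log (R / a) := by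
  have e : ∀ t : ℝ, t ^ ((0:ℝ) - 1) = t⁻¹ := fun t => by rw [zero_sub, Real.rpow_neg_one]
  constructor
  · refine rad_int d hd _ measurableSet_Ioc (fun t ht => ha.trans ht.1) _ ?_
    rw [← intervalIntegrable_iff_integrableOn_Ioc_of_le hR]
    simp only [e]
    refine intervalIntegral.intervalIntegrable_inv (f := fun t => t) (fun t ht => ?_) (by fun_prop)
    rw [uIcc_of_le hR] at ht
    exact (ha.trans_le ht.1).ne'
  · rw [rad_eq d hd _ measurableSet_Ioc (fun t ht => ha.trans ht.1) _,
      ← intervalIntegral.integral_of_le hR]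
    simp only [e]
    rw [integral_inv_of_pos ha (ha.trans_le hR)]

/-- Taylor bound -/
lemma taylor_bd (d : ℕ) (F : EuclideanSpace ℝ (Fin d) → ℝ) (U : Set (EuclideanSpace ℝ (Fin d)))
    (hU : IsOpen U) (hF : ContDiffOn ℝ 2 F U) (x : EuclideanSpace ℝ (Fin d)) (l B : ℝ)
    (hl : 0 ≤ l) (hB : 0 ≤ B)
    (hsub : closedBall x l ⊆ U)
    (hb : ∀ w ∈ closedBall x l, ∀ i j : Fin d,
      |fderiv ℝ (fun w => fderiv ℝ F w (EuclideanSpace.single i (1 : ℝ))) w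
            (EuclideanSpace.single j (1 : ℝ))| ≤ B)
    (z : EuclideanSpace ℝ (Fin d)) (hz : ‖z‖ ≤ l) :
    |F (x + z) - F x - fderiv ℝ F x z| ≤ (d : ℝ) ^ 2 * B * ‖z‖ ^ 2 := by
  have h1 : ∀ w ∈ U, DifferentiableAt ℝ F w := fun w hw =>
    (hF.contDiffAt (hU.mem_nhds hw)).differentiableAt (by norm_num)
  have h2 : ∀ w ∈ U, DifferentiableAt ℝ (fderiv ℝ F) w := fun w hw =>
    ((hF.contDiffAt (hU.mem_nhds hw)).fderiv_right (m := 1) (by norm_num)).differentiableAt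
      (by norm_num)
  have hexp : ∀ v : EuclideanSpace ℝ (Fin d),
      v = ∑ i, v i • EuclideanSpace.single i (1 : ℝ) := by
    intro v
    have := (EuclideanSpace.basisFun (Fin d) ℝ).sum_repr v
    simpa using this.symm
  have h3 : ∀ w ∈ closedBall x l, ‖fderiv ℝ (fderiv ℝ F) w‖ ≤ (d : ℝ) ^ 2 * B := by
    intro w hw
    have hd2 := h2 w (hsub hw)
    set T := fderiv ℝ (fderiv ℝ F) w with hT
    have hij : ∀ i j : Fin d, |T (EuclideanSpace.single j (1 : ℝ))
        (EuclideanSpace.single i (1 : ℝ))| ≤ B := by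
      intro i j
      have := hb w hw i j
      rw [fderiv_clm_apply hd2 (by fun_prop)] at this
      simpa using this
    refine T.opNorm_le_bound (by positivity) fun u => ?_
    refine (T u).opNorm_le_bound (by positivity) fun v => ?_
    have : T u v = ∑ j, ∑ i, u j * v i * T (EuclideanSpace.single j (1 : ℝ))
        (EuclideanSpace.single i (1 : ℝ)) := by
      conv_lhs => rw [hexp u, hexp v]
      simp only [map_sum, map_smul, sum_apply, smul_apply,
        smul_eq_mul, Finset.mul_sum]
      rw [Finset.sum_comm]
      refine Finset.sum_congr rfl fun j _ => Finset.sum_congr rfl fun i _ => ?_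
      ring
    rw [this]
    calc ‖∑ j, ∑ i, u j * v i * T (EuclideanSpace.single j (1 : ℝ))
            (EuclideanSpace.single i (1 : ℝ))‖
        ≤ ∑ j : Fin d, ∑ i : Fin d, ‖u‖ * ‖v‖ * B := by
          refine norm_sum_le_of_le _ fun j _ => norm_sum_le_of_le _ fun i _ => ?_
          rw [norm_mul, norm_mul]
          have e1 := PiLp.norm_apply_le u j
          have e2 := PiLp.norm_apply_le v i
          have e3 := hij i j
          rw [Real.norm_eq_abs (T _ _)]
          gcongr
      _ = _ := by
          simp; ring
  have hxb : x ∈ closedBall x l := mem_closedBall_self hl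
  have hs : closedBall x ‖z‖ ⊆ closedBall x l := closedBall_subset_closedBall hz
  have h4 : ∀ w ∈ closedBall x ‖z‖, ‖fderiv ℝ F w - fderiv ℝ F x‖ ≤ (d : ℝ) ^ 2 * B * ‖z‖ := by
    intro w hw
    have := (convex_closedBall x l).norm_image_sub_le_of_norm_fderiv_le (𝕜 := ℝ)
      (fun w hw => h2 w (hsub hw)) h3 hxb (hs hw)
    refine this.trans ?_
    have : ‖w - x‖ ≤ ‖z‖ := by simpa [dist_eq_norm] using hw
    gcongr
  have h5 := (convex_closedBall x ‖z‖).norm_image_sub_le_of_norm_fderiv_le' (𝕜 := ℝ)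
      (fun w hw => h1 w (hsub (hs hw))) h4 (mem_closedBall_self (norm_nonneg z))
      (y := x + z) (by simp)
  simp only [add_sub_cancel_left, Real.norm_eq_abs] at h5
  refine h5.trans (le_of_eq ?_)
  ring

lemma delta_pos {d : ℕ} (hd : 2 ≤ d) {D : Set (EuclideanSpace ℝ (Fin d))} (hD : IsOpen D)
    (hb : Bornology.IsBounded D) {x : EuclideanSpace ℝ (Fin d)} (hx : x ∈ D) :
    0 < deltaD D x := by
  have : Nonempty (Fin d) := ⟨⟨0, by omega⟩⟩
  have hne : (frontier D).Nonempty := by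
    rw [nonempty_frontier_iff]
    refine ⟨⟨x, hx⟩, fun h => ?_⟩
    rw [h] at hb
    exact NormedSpace.unbounded_univ ℝ (EuclideanSpace ℝ (Fin d)) hb
  refine (isClosed_frontier.notMem_iff_infDist_pos hne).1 ?_
  rw [hD.frontier_eq]
  exact fun h => h.2 hx

lemma delta_ball {d : ℕ} {D : Set (EuclideanSpace ℝ (Fin d))} (hD : IsOpen D)
    {x w : EuclideanSpace ℝ (Fin d)} (hx : x ∈ D) (hw : dist w x < deltaD D x) : w ∈ D := by
  have hc : IsPreconnected (ball x (deltaD D x)) := (convex_ball x _).isPreconnected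
  have hp : 0 < deltaD D x := dist_nonneg.trans_lt hw
  have hf : ∀ u ∈ ball x (deltaD D x), u ∉ frontier D := by
    intro u hu1 hu2
    have := Metric.infDist_le_dist_of_mem (x := x) hu2
    rw [mem_ball, dist_comm] at hu1
    exact absurd this (not_le.2 hu1)
  have hsub : ball x (deltaD D x) ⊆ D ∪ (closure D)ᶜ := by
    intro u hu
    by_contra hn
    simp only [mem_union, mem_compl_iff, not_or, not_not] at hn
    refine hf u hu ?_
    rw [hD.frontier_eq]
    exact ⟨hn.2, hn.1⟩
  by_contra hn
  have hwc : w ∈ (closure D)ᶜ := (hsub hw).resolve_left hn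
  obtain ⟨u, _, hu2, hu3⟩ := hc D (closure D)ᶜ hD isClosed_closure.isOpen_compl hsub
    ⟨x, mem_ball_self hp, hx⟩ ⟨w, hw, hwc⟩
  exact hu3 (subset_closure hu2)

lemma delta_lip {d : ℕ} {D : Set (EuclideanSpace ℝ (Fin d))}
    (x w : EuclideanSpace ℝ (Fin d)) : deltaD D x ≤ deltaD D w + dist x w :=
  Metric.infDist_le_infDist_add_dist

lemma delta_nonneg {d : ℕ} {D : Set (EuclideanSpace ℝ (Fin d))}
    (x : EuclideanSpace ℝ (Fin d)) : 0 ≤ deltaD D x := Metric.infDist_nonneg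

/-- the profile of `hKer` in `M = max 1 (r / δ)` -/
def Hf (α β M : ℝ) : ℝ :=
  if 2 * β < α then 1 else if α = 2 * β then max 1 (Real.log M) else M ^ (β - α / 2)

lemma one_le_Hf (α β M : ℝ) (hM : 1 ≤ M) : 1 ≤ Hf α β M := by
  unfold Hf
  split_ifs with h1 h2
  · exact le_rfl
  · exact le_max_left _ _
  · push Not at h1
    exact Real.one_le_rpow hM (by linarith)

lemma pow_le_Hf (α β M : ℝ) (hM : 1 ≤ M) : M ^ (β - α / 2) ≤ Hf α β M := by
  unfold Hf
  split_ifs with h1 h2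
  · exact Real.rpow_le_one_of_one_le_of_nonpos hM (by linarith)
  · rw [h2, show β - 2 * β / 2 = 0 by ring, Real.rpow_zero]
    exact le_max_left _ _
  · exact le_rfl

lemma rad_mid (d : ℕ) (hd : 2 ≤ d) (α β : ℝ) :
    ∃ C ≥ 0, ∀ r M : ℝ, 0 < r → 1 ≤ M →
      Integrable (radI d (Ioc (r / (2 * M)) r) (α / 2 - β)) ∧
      ∫ z, radI d (Ioc (r / (2 * M)) r) (α / 2 - β) z ≤ C * r ^ (α / 2 - β) * Hf α β M := by
  have hK := radK_nonneg d
  have hl : ∀ r M : ℝ, 0 < r → 1 ≤ M → 0 < r / (2 * M) ∧ r / (2 * M) ≤ r := by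
    intro r M hr hM
    refine ⟨by positivity, ?_⟩
    rw [div_le_iff₀ (by positivity)]
    nlinarith
  have hint : ∀ r M : ℝ, 0 < r → 1 ≤ M →
      Integrable (radI d (Ioc (r / (2 * M)) r) (α / 2 - β)) := by
    intro r M hr hM
    obtain ⟨h1, h2⟩ := hl r M hr hM
    refine rad_int d hd _ measurableSet_Ioc (fun t ht => h1.trans ht.1) _ ?_
    rw [← intervalIntegrable_iff_integrableOn_Ioc_of_le h2]
    refine intervalIntegral.intervalIntegrable_rpow (Or.inr ?_)
    rw [uIcc_of_le h2]
    exact fun h => absurd h.1 (not_le.2 h1)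
  have hval : ∀ r M : ℝ, 0 < r → 1 ≤ M → α / 2 - β ≠ 0 →
      ∫ z, radI d (Ioc (r / (2 * M)) r) (α / 2 - β) z
       = radK d * ((r ^ (α / 2 - β) - (r / (2 * M)) ^ (α / 2 - β)) / (α / 2 - β)) := by
    intro r M hr hM hne
    obtain ⟨h1, h2⟩ := hl r M hr hM
    rw [rad_eq d hd _ measurableSet_Ioc (fun t ht => h1.trans ht.1),
      ← intervalIntegral.integral_of_le h2, integral_rpow]
    · simp
    · right
      refine ⟨fun h => hne (by linarith), ?_⟩
      rw [uIcc_of_le h2]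
      exact fun h => absurd h.1 (not_le.2 h1)
  rcases lt_trichotomy (2 * β) α with h | h | h
  · refine ⟨radK d * (1 / (α / 2 - β)), by
      have : 0 < α / 2 - β := by linarith
      positivity, fun r M hr hM => ⟨hint r M hr hM, ?_⟩⟩
    have hq : 0 < α / 2 - β := by linarith
    rw [hval r M hr hM hq.ne']
    unfold Hf
    rw [if_pos h, mul_one, mul_assoc]
    refine mul_le_mul_of_nonneg_left ?_ hK
    rw [one_div, inv_mul_eq_div]
    have := (hl r M hr hM).1
    gcongr
    have : 0 ≤ (r / (2 * M)) ^ (α / 2 - β) := by positivity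
    linarith
  · refine ⟨radK d * 2, by positivity, fun r M hr hM => ⟨hint r M hr hM, ?_⟩⟩
    have e : α / 2 - β = 0 := by linarith
    obtain ⟨h1, h2⟩ := hl r M hr hM
    rw [e, (rad3 d hd _ r h1 h2).2]
    unfold Hf
    rw [if_neg (by linarith), if_pos h.symm, Real.rpow_zero, mul_one, mul_assoc]
    refine mul_le_mul_of_nonneg_left ?_ hK
    have : r / (r / (2 * M)) = 2 * M := by field_simp
    rw [this, Real.log_mul (by norm_num) (by positivity)]
    have h3 : Real.log 2 ≤ 1 := by have := Real.log_two_lt_d9; linarith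
    have h4 := le_max_left 1 (Real.log M)
    have h5 := le_max_right 1 (Real.log M)
    linarith
  · have hq : 0 < β - α / 2 := by linarith
    refine ⟨radK d * (2 ^ (β - α / 2) / (β - α / 2)), by positivity,
      fun r M hr hM => ⟨hint r M hr hM, ?_⟩⟩
    rw [hval r M hr hM (by linarith)]
    unfold Hf
    rw [if_neg (by linarith), if_neg (by linarith), mul_assoc, mul_assoc]
    refine mul_le_mul_of_nonneg_left ?_ hK
    have hM0 : 0 < M := by linarith
    have e : (r / (2 * M)) ^ (α / 2 - β) = r ^ (α / 2 - β) * (2 ^ (β - α / 2) * M ^ (β - α / 2)) := by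
      rw [Real.div_rpow hr.le (by positivity), div_eq_mul_inv, ← Real.rpow_neg (by positivity),
        Real.mul_rpow (by norm_num) hM0.le]
      congr 2 <;> ring_nf
    rw [e]
    have e2 : (r ^ (α / 2 - β) - r ^ (α / 2 - β) * (2 ^ (β - α / 2) * M ^ (β - α / 2)))
        / (α / 2 - β) = (r ^ (α / 2 - β) * (2 ^ (β - α / 2) * M ^ (β - α / 2)) - r ^ (α / 2 - β))
        / (β - α / 2) := by
      rw [← neg_div_neg_eq]; congr 1 <;> ring
    rw [e2]
    have : 0 ≤ r ^ (α / 2 - β) := by positivity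
    calc _ ≤ (r ^ (α / 2 - β) * (2 ^ (β - α / 2) * M ^ (β - α / 2))) / (β - α / 2) := by
          gcongr; linarith
      _ = _ := by ring

lemma lam_eq {r δ : ℝ} (hr : 0 < r) (hδ : 0 < δ) :
    min δ r / 2 = r / (2 * max 1 (r / δ)) := by
  rcases le_total δ r with h | h
  · rw [min_eq_left h, max_eq_right ((one_le_div hδ).2 h)]
    field_simp
  · rw [min_eq_right h, max_eq_left ((div_le_one hδ).2 h)]
    ring

lemma min_inv {r δ : ℝ} (hr : 0 < r) (hδ : 0 < δ) :
    min 1 (δ / r) = (max 1 (r / δ))⁻¹ := by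
  rcases le_total δ r with h | h
  · rw [min_eq_right ((div_le_one hr).2 h), max_eq_right ((one_le_div hδ).2 h)]
    field_simp
  · rw [min_eq_left ((one_le_div hr).2 h), max_eq_left ((div_le_one hδ).2 h)]
    simp

/-- comparing the boundary factor at distance `t` with the one at distance `r` -/
lemma min_cmp {r t k δ : ℝ} (hr : 0 < r) (ht : 0 < t) (hδ : 0 ≤ δ) (hk : 1 ≤ k) (h : r ≤ k * t) :
    min 1 (δ / t) ≤ k * min 1 (δ / r) := by
  rcases le_total (δ / r) 1 with h1 | h1
  · rw [min_eq_right h1]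
    refine (min_le_right _ _).trans ?_
    rw [div_le_iff₀ ht]
    have : δ = δ / r * r := by field_simp
    have h2 : 0 ≤ δ / r := by positivity
    nlinarith
  · rw [min_eq_left h1]
    exact (min_le_left _ _).trans (by linarith)

lemma alg1 (a p β dd r M : ℝ) (hr : 0 < r) (hM : 0 < M) :
    (r / 2) ^ (a - dd - 2) * (3 * M) ^ (2 - p) * (r / (2 * M)) ^ (2 - β)
     = ((1 / 2) ^ (a - dd - 2) * 3 ^ (2 - p) * (1 / 2) ^ (2 - β)) *
       (r ^ (a - β - dd) * M ^ (β - p)) := by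
  rw [show r / 2 = r * (1 / 2) by ring, show r / (2 * M) = r * (1 / 2) * M⁻¹ by field_simp,
    Real.mul_rpow (by positivity) (by positivity), Real.mul_rpow (by positivity) (by positivity),
    Real.mul_rpow (by positivity) (by positivity), Real.mul_rpow (by positivity) (by positivity),
    Real.inv_rpow hM.le, ← Real.rpow_neg hM.le,
    show a - β - dd = (a - dd - 2) + (2 - β) by ring,
    show β - p = (2 - p) + -(2 - β) by ring, Real.rpow_add hr, Real.rpow_add hM]
  ring

lemma step1 (d : ℕ) (hd : 2 ≤ d) (α β : ℝ)
    (hβ : 0 < β) (hβα : β < α) (hα : α < 2) (c₂ : ℝ) (hc₂ : 0 < c₂) :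
    ∃ C ≥ 0, ∀ (D : Set (EuclideanSpace ℝ (Fin d))), IsOpen D → Bornology.IsBounded D →
      ∀ G : EuclideanSpace ℝ (Fin d) → EuclideanSpace ℝ (Fin d) → ℝ,
      (∀ y ∈ D, ContDiffOn ℝ 2 (fun w => G w y) (D \ {y})) →
      (∀ x ∈ D, ∀ y ∈ D, x ≠ y → ∀ i j : Fin d,
        |fderiv ℝ (fun w => fderiv ℝ (fun w' => G w' y) w (EuclideanSpace.single i (1 : ℝ))) x
            (EuclideanSpace.single j (1 : ℝ))|
          ≤ c₂ * ‖x - y‖ ^ (α - (d : ℝ) - 2) * min 1 (deltaD D y / ‖x - y‖) ^ (α / 2)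
            * max 1 (‖x - y‖ / deltaD D x) ^ (2 - α / 2)) →
      ∀ (b : EuclideanSpace ℝ (Fin d) → EuclideanSpace ℝ (Fin d) → ℝ) (A : ℝ),
        (∀ x z, |b x z| ≤ A) →
        ∀ x ∈ D, ∀ y ∈ D, x ≠ y →
          (∫ z in {z : EuclideanSpace ℝ (Fin d) | ‖z‖ ≤ min (deltaD D x) ‖x - y‖ / 2},
                |G (x + z) y - G x y - fderiv ℝ (fun w => G w y) x z| * |b x z|
                  * ‖z‖ ^ (-(d : ℝ) - β))
            ≤ C * A * (‖x - y‖ ^ (α - β - (d : ℝ)) * min 1 (deltaD D y / ‖x - y‖) ^ (α / 2)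
              * Hf α β (max 1 (‖x - y‖ / deltaD D x))) := by
  have hK := radK_nonneg d
  set c : ℝ := (1 / 2) ^ (α - (d : ℝ) - 2) * 3 ^ (2 - α / 2) * (1 / 2) ^ (2 - β) with hc
  have hc0 : 0 ≤ c := by positivity
  have hb2 : 0 < 2 - β := by linarith
  refine ⟨(d : ℝ) ^ 2 * c₂ * 2 ^ (α / 2) * (radK d / (2 - β)) * c, by positivity, ?_⟩
  intro D hD hDb G hG hG2 b A hb x hx y hy hxy
  have hA : 0 ≤ A := (abs_nonneg _).trans (hb x x)
  have hδ := delta_pos hd hD hDb hx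
  have hδy := delta_pos hd hD hDb hy
  have hr : 0 < ‖x - y‖ := norm_pos_iff.2 (sub_ne_zero.2 hxy)
  rw [lam_eq hr hδ]
  have hle := lam_eq hr hδ
  set r := ‖x - y‖ with hrdef
  set M := max 1 (r / deltaD D x) with hMdef
  have hM : 1 ≤ M := le_max_left _ _
  have hM0 : 0 < M := by linarith
  set l := r / (2 * M) with hl
  have hl0 : 0 < l := by positivity
  have hlr : l ≤ r / 2 := by
    rw [← hle]; have := min_le_right (deltaD D x) r; linarith
  have hlδ : l ≤ deltaD D x / 2 := by
    rw [← hle]; have := min_le_left (deltaD D x) r; linarith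
  set m := min 1 (deltaD D y / r) ^ (α / 2) with hm
  have hm0 : 0 ≤ m := by positivity
  set B : ℝ := c₂ * (r / 2) ^ (α - (d : ℝ) - 2) * (2 ^ (α / 2) * m) * (3 * M) ^ (2 - α / 2) with hB
  have hB0 : 0 ≤ B := by positivity
  have hd' : (2 : ℝ) ≤ d := by exact_mod_cast hd
  -- geometry of the small ball
  have hgeo : ∀ w ∈ closedBall x l, w ∈ D ∧ w ≠ y ∧ r / 2 ≤ ‖w - y‖ ∧ ‖w - y‖ ≤ 3 / 2 * r ∧
      deltaD D x / 2 ≤ deltaD D w := by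
    intro w hw
    rw [mem_closedBall] at hw
    have h1 : r ≤ dist w x + ‖w - y‖ := by
      rw [hrdef, ← dist_eq_norm, ← dist_eq_norm, dist_comm w x]; exact dist_triangle _ _ _
    have h2 : ‖w - y‖ ≤ dist w x + r := by
      rw [hrdef, ← dist_eq_norm, ← dist_eq_norm]; exact dist_triangle _ _ _
    have h3 := delta_lip (D := D) x w
    rw [dist_comm] at h3
    refine ⟨delta_ball hD hx (by linarith), ?_, by linarith, by linarith, by linarith⟩
    rintro rfl
    simp at h1
    linarith
  have htay : ∀ z : EuclideanSpace ℝ (Fin d), ‖z‖ ≤ l →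
      |G (x + z) y - G x y - fderiv ℝ (fun w => G w y) x z| ≤ (d : ℝ) ^ 2 * B * ‖z‖ ^ 2 := by
    intro z hz
    refine taylor_bd d (fun w => G w y) (D \ {y}) (hD.sdiff isClosed_singleton) (hG y hy) x l B
      hl0.le hB0 (fun w hw => ⟨(hgeo w hw).1, (hgeo w hw).2.1⟩) ?_ z hz
    intro w hw i j
    obtain ⟨g1, g2, g3, g4, g5⟩ := hgeo w hw
    have hwy : 0 < ‖w - y‖ := by linarith
    have hδw : 0 < deltaD D w := by linarith
    refine (hG2 w g1 y hy g2 i j).trans ?_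
    have e1 : ‖w - y‖ ^ (α - (d : ℝ) - 2) ≤ (r / 2) ^ (α - (d : ℝ) - 2) :=
      Real.rpow_le_rpow_of_nonpos (by positivity) g3 (by linarith)
    have e2 : min 1 (deltaD D y / ‖w - y‖) ^ (α / 2) ≤ 2 ^ (α / 2) * m := by
      rw [hm, ← Real.mul_rpow (by norm_num) (by positivity)]
      exact Real.rpow_le_rpow (by positivity)
        (min_cmp hr hwy hδy.le (by norm_num) (by linarith)) (by linarith)
    have e3 : max 1 (‖w - y‖ / deltaD D w) ^ (2 - α / 2) ≤ (3 * M) ^ (2 - α / 2) := by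
      refine Real.rpow_le_rpow (by positivity) (max_le (by linarith) ?_) (by linarith)
      have : r / deltaD D x ≤ M := le_max_right _ _
      rw [div_le_iff₀ hδ] at this
      rw [div_le_iff₀ hδw]
      nlinarith
    rw [hB]
    gcongr
  have hS : MeasurableSet {z : EuclideanSpace ℝ (Fin d) | ‖z‖ ≤ l} :=
    measurableSet_le measurable_norm measurable_const
  obtain ⟨hi, hv⟩ := rad1 d hd (2 - β) l hb2 hl0
  rw [← integral_indicator hS]
  calc _ ≤ ∫ z, ((d : ℝ) ^ 2 * B * A) * radI d (Ioc 0 l) (2 - β) z := by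
        refine integral_mono_of_nonneg (Filter.Eventually.of_forall fun z => ?_)
          (hi.const_mul _) (Filter.Eventually.of_forall fun z => ?_)
        · exact Set.indicator_apply_nonneg fun _ => by positivity
        · have hrn := radI_nonneg d (Ioc 0 l) (2 - β) z
          refine Set.indicator_apply_le' (fun hz => ?_) (fun _ => by positivity)
          have hz : ‖z‖ ≤ l := hz
          rcases eq_or_ne z 0 with rfl | hz0
          · simp only [add_zero, sub_self, map_zero, abs_zero, zero_mul]
            positivity
          · have hzp : 0 < ‖z‖ := norm_pos_iff.2 hz0
            beta_reduce
            rw [radI_mem (show ‖z‖ ∈ Ioc 0 l from ⟨hzp, hz⟩)]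
            have : ‖z‖ ^ (2 - β - (d : ℝ)) = ‖z‖ ^ 2 * ‖z‖ ^ (-(d : ℝ) - β) := by
              rw [← Real.rpow_natCast, ← Real.rpow_add hzp]; congr 1; push_cast; ring
            rw [this]
            calc _ ≤ ((d : ℝ) ^ 2 * B * ‖z‖ ^ 2) * A * ‖z‖ ^ (-(d : ℝ) - β) := by
                  have h1 := htay z hz
                  have h2 := hb x z
                  gcongr
              _ = _ := by ring
    _ = ((d : ℝ) ^ 2 * B * A) * (radK d * (l ^ (2 - β) / (2 - β))) := by
        rw [integral_const_mul, hv]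
    _ = (d : ℝ) ^ 2 * c₂ * 2 ^ (α / 2) * (radK d / (2 - β)) * A * m *
          ((r / 2) ^ (α - (d : ℝ) - 2) * (3 * M) ^ (2 - α / 2) * (r / (2 * M)) ^ (2 - β)) := by
        rw [hB, hl]; ring
    _ = (d : ℝ) ^ 2 * c₂ * 2 ^ (α / 2) * (radK d / (2 - β)) * A * m *
          (c * (r ^ (α - β - (d : ℝ)) * M ^ (β - α / 2))) := by
        rw [alg1 α (α / 2) β d r M hr hM0]
    _ ≤ (d : ℝ) ^ 2 * c₂ * 2 ^ (α / 2) * (radK d / (2 - β)) * A * m *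
          (c * (r ^ (α - β - (d : ℝ)) * Hf α β M)) := by
        have := pow_le_Hf α β M hM
        gcongr
    _ = _ := by ring

lemma algT1 (α β dd r M : ℝ) (hr : 0 < r) (hM : 0 < M) :
    r ^ (α - dd) * M⁻¹ ^ (α / 2) * (r / (2 * M)) ^ (-β)
      = (1 / 2) ^ (-β) * (r ^ (α - β - dd) * M ^ (β - α / 2)) := by
  rw [show r / (2 * M) = r * (1 / 2) * M⁻¹ by field_simp,
    Real.mul_rpow (by positivity) (by positivity), Real.mul_rpow (by positivity) (by positivity),
    Real.inv_rpow hM.le, ← Real.rpow_neg hM.le, Real.inv_rpow hM.le, ← Real.rpow_neg hM.le,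
    show α - β - dd = (α - dd) + (-β) by ring,
    show β - α / 2 = -(α / 2) + - -β by ring, Real.rpow_add hr, Real.rpow_add hM]
  ring

lemma algT2 (α β dd r : ℝ) (hr : 0 < r) :
    (r / 2) ^ (-dd - β) * r ^ (α / 2) * (r / 2) ^ (α / 2)
      = ((1 / 2) ^ (-dd - β) * (1 / 2) ^ (α / 2)) * r ^ (α - β - dd) := by
  rw [show r / 2 = r * (1 / 2) by ring,
    Real.mul_rpow (by positivity) (by positivity), Real.mul_rpow (by positivity) (by positivity),
    show α - β - dd = (-dd - β) + (α / 2) + (α / 2) by ring, Real.rpow_add hr, Real.rpow_add hr]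
  ring

lemma algT3 (α β dd r : ℝ) (hr : 0 < r) :
    (r / 2) ^ (α - dd) * (6 / r) ^ (α / 2) * r ^ (α / 2 - β)
      = ((1 / 2) ^ (α - dd) * 6 ^ (α / 2)) * r ^ (α - β - dd) := by
  rw [show r / 2 = r * (1 / 2) by ring, show 6 / r = 6 * r⁻¹ by ring,
    Real.mul_rpow (by positivity) (by positivity), Real.mul_rpow (by positivity) (by positivity),
    Real.inv_rpow hr.le, ← Real.rpow_neg hr.le,
    show α - β - dd = (α - dd) + -(α / 2) + (α / 2 - β) by ring, Real.rpow_add hr, Real.rpow_add hr]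
  ring

lemma algT4 (α β dd r : ℝ) (hr : 0 < r) :
    (r / 2) ^ (α - dd) * r ^ (-β) = (1 / 2) ^ (α - dd) * r ^ (α - β - dd) := by
  rw [show r / 2 = r * (1 / 2) by ring,
    Real.mul_rpow (by positivity) (by positivity),
    show α - β - dd = (α - dd) + (-β) by ring, Real.rpow_add hr]
  ring

set_option maxHeartbeats 2000000 in
lemma step2 (d : ℕ) (hd : 2 ≤ d) (α β : ℝ)
    (hβ : 0 < β) (hβα : β < α) (hα : α < 2) (c₀ : ℝ) (hc₀ : 0 < c₀) :
    ∃ C ≥ 0, ∀ (D : Set (EuclideanSpace ℝ (Fin d))), IsOpen D → Bornology.IsBounded D →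
      ∀ G : EuclideanSpace ℝ (Fin d) → EuclideanSpace ℝ (Fin d) → ℝ,
      (∀ x y, x ∉ D ∨ y ∉ D → G x y = 0) →
      (∀ x ∈ D, ∀ y ∈ D, x ≠ y → 0 ≤ G x y) →
      (∀ x ∈ D, ∀ y ∈ D, x ≠ y →
        G x y ≤ c₀ * ‖x - y‖ ^ (α - (d : ℝ)) * min 1 (deltaD D x / ‖x - y‖) ^ (α / 2)
          * min 1 (deltaD D y / ‖x - y‖) ^ (α / 2)) →
      ∀ (b : EuclideanSpace ℝ (Fin d) → EuclideanSpace ℝ (Fin d) → ℝ) (A : ℝ),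
        (∀ x z, |b x z| ≤ A) →
        ∀ x ∈ D, ∀ y ∈ D, x ≠ y →
          (∫ z in {z : EuclideanSpace ℝ (Fin d) | min (deltaD D x) ‖x - y‖ / 2 < ‖z‖},
                  (G (x + z) y + G x y) * |b x z| * ‖z‖ ^ (-(d : ℝ) - β))
            ≤ C * A * (‖x - y‖ ^ (α - β - (d : ℝ)) * min 1 (deltaD D y / ‖x - y‖) ^ (α / 2)
              * Hf α β (max 1 (‖x - y‖ / deltaD D x))) := by
  have hK := radK_nonneg d
  obtain ⟨C3, hC3, hmid⟩ := rad_mid d hd α β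
  have hα0 : 0 < α := by linarith
  refine ⟨c₀ * (1 / 2) ^ (-β) * (radK d / β)
    + c₀ * ((1 / 2) ^ (-(d : ℝ) - β) * (1 / 2) ^ (α / 2)) * (radK d / (α / 2))
    + c₀ * 2 ^ (α / 2) * ((1 / 2) ^ (α - (d : ℝ)) * 6 ^ (α / 2)) * C3
    + c₀ * 2 ^ (α / 2) * (1 / 2) ^ (α - (d : ℝ)) * (radK d / β), by positivity, ?_⟩
  intro D hD hDb G hG0 hGn hGb b A hb x hx y hy hxy
  have hA : 0 ≤ A := (abs_nonneg _).trans (hb x x)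
  have hδ := delta_pos hd hD hDb hx
  have hδy := delta_pos hd hD hDb hy
  have hr : 0 < ‖x - y‖ := norm_pos_iff.2 (sub_ne_zero.2 hxy)
  have hGx0 := hGn x hx y hy hxy
  have hGx := hGb x hx y hy hxy
  rw [min_inv hr hδ] at hGx
  rw [lam_eq hr hδ]
  have hle := lam_eq hr hδ
  set r := ‖x - y‖ with hrdef
  set M := max 1 (r / deltaD D x) with hMdef
  have hM : 1 ≤ M := le_max_left _ _
  have hM0 : 0 < M := by linarith
  obtain ⟨hi3, hv3⟩ := hmid r M hr hM
  set l := r / (2 * M) with hl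
  have hl0 : 0 < l := by positivity
  set m := min 1 (deltaD D y / r) ^ (α / 2) with hm
  have hm0 : 0 ≤ m := by positivity
  have hd' : (2 : ℝ) ≤ d := by exact_mod_cast hd
  obtain ⟨hi1, hv1⟩ := rad2 d hd β l hβ hl0
  obtain ⟨hi4, hv4⟩ := rad2 d hd β r hβ hr
  obtain ⟨hi2, hv2⟩ := rad1 d hd (α / 2) (r / 2) (by linarith) (by linarith)
  have hi2' := hi2.comp_sub_right (y - x)
  have hv2' : ∫ z, radI d (Ioc 0 (r / 2)) (α / 2) (z - (y - x))
      = radK d * ((r / 2) ^ (α / 2) / (α / 2)) := by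
    rw [integral_sub_right_eq_self (fun z => radI d (Ioc 0 (r / 2)) (α / 2) z), hv2]
  set P1 : ℝ := c₀ * (r / 2) ^ (-(d : ℝ) - β) * r ^ (α / 2) * m with hP1
  set P2 : ℝ := c₀ * (r / 2) ^ (α - (d : ℝ)) * 2 ^ (α / 2) * m with hP2
  have hP10 : 0 ≤ P1 := by positivity
  have hP20 : 0 ≤ P2 := by positivity
  -- pointwise bound on the moved Green function
  have hpt : ∀ z : EuclideanSpace ℝ (Fin d), z ≠ y - x → l < ‖z‖ →
      0 ≤ G (x + z) y ∧ G (x + z) y * ‖z‖ ^ (-(d : ℝ) - β) ≤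
        P1 * radI d (Ioc 0 (r / 2)) (α / 2) (z - (y - x))
        + P2 * ((6 / r) ^ (α / 2) * radI d (Ioc l r) (α / 2 - β) z + radI d (Ioi r) (-β) z) := by
    intro z hzy hz
    have hn1 := radI_nonneg d (Ioc 0 (r / 2)) (α / 2) (z - (y - x))
    have hn2 := radI_nonneg d (Ioc l r) (α / 2 - β) z
    have hn3 := radI_nonneg d (Ioi r) (-β) z
    have hzp : 0 < ‖z‖ := hl0.trans hz
    by_cases hu : x + z ∈ D
    swap
    · rw [hG0 _ _ (Or.inl hu), zero_mul]
      exact ⟨le_rfl, by positivity⟩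
    have huy : x + z ≠ y := fun h => hzy (by rw [← h]; simp)
    refine ⟨hGn _ hu y hy huy, ?_⟩
    have ht : 0 < ‖x + z - y‖ := norm_pos_iff.2 (sub_ne_zero.2 huy)
    have hB := hGb _ hu y hy huy
    have hnz : z - (y - x) = x + z - y := by abel
    have htri : r ≤ ‖z‖ + ‖x + z - y‖ := by
      have := norm_sub_le (x + z - y) z
      rw [show x + z - y - z = x - y by abel] at this
      linarith
    set t := ‖x + z - y‖ with htdef
    have hu0 : 0 ≤ deltaD D (x + z) := delta_nonneg _
    rcases le_or_gt t (r / 2) with h | h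
    · have hz2 : r / 2 ≤ ‖z‖ := by linarith
      refine le_add_of_le_of_nonneg ?_ (by positivity)
      rw [hnz, radI_mem (show ‖x + z - y‖ ∈ Ioc 0 (r / 2) from ⟨ht, h⟩), ← htdef]
      have e1 : ‖z‖ ^ (-(d : ℝ) - β) ≤ (r / 2) ^ (-(d : ℝ) - β) :=
        Real.rpow_le_rpow_of_nonpos (by positivity) hz2 (by linarith)
      have e2 : min 1 (deltaD D y / t) ^ (α / 2) ≤ r ^ (α / 2) * t ^ (-(α / 2)) * m := by
        rw [Real.rpow_neg ht.le, ← Real.inv_rpow ht.le, ← Real.mul_rpow hr.le (by positivity),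
          hm, ← Real.mul_rpow (by positivity) (by positivity)]
        refine Real.rpow_le_rpow (by positivity)
          (min_cmp hr ht hδy.le ?_ ?_) (by linarith)
        · rw [← div_eq_mul_inv, one_le_div ht]; linarith
        · field_simp; exact le_rfl
      have e3 : min 1 (deltaD D (x + z) / t) ^ (α / 2) ≤ 1 :=
        Real.rpow_le_one (by positivity) (min_le_left _ _) (by linarith)
      have e4 : t ^ (α / 2 - (d : ℝ)) = t ^ (α - (d : ℝ)) * t ^ (-(α / 2)) := by
        rw [← Real.rpow_add ht]; congr 1; ring
      calc _ ≤ (c₀ * t ^ (α - (d : ℝ)) * 1 * (r ^ (α / 2) * t ^ (-(α / 2)) * m))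
            * (r / 2) ^ (-(d : ℝ) - β) := by
            refine mul_le_mul (hB.trans ?_) e1 (by positivity) (by positivity)
            gcongr
        _ = _ := by rw [e4, hP1]; ring
    · refine le_add_of_nonneg_of_le (by positivity) ?_
      have e1 : t ^ (α - (d : ℝ)) ≤ (r / 2) ^ (α - (d : ℝ)) :=
        Real.rpow_le_rpow_of_nonpos (by positivity) h.le (by linarith)
      have e2 : min 1 (deltaD D y / t) ^ (α / 2) ≤ 2 ^ (α / 2) * m := by
        rw [hm, ← Real.mul_rpow (by norm_num) (by positivity)]
        exact Real.rpow_le_rpow (by positivity)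
          (min_cmp hr ht hδy.le (by norm_num) (by linarith)) (by linarith)
      have e3 : min 1 (deltaD D (x + z) / t) ^ (α / 2) * ‖z‖ ^ (-(d : ℝ) - β) ≤
          (6 / r) ^ (α / 2) * radI d (Ioc l r) (α / 2 - β) z + radI d (Ioi r) (-β) z := by
        rcases le_or_gt ‖z‖ r with h' | h'
        · refine le_add_of_le_of_nonneg ?_ hn3
          rw [radI_mem (show ‖z‖ ∈ Ioc l r from ⟨hz, h'⟩)]
          have f1 : min 1 (deltaD D (x + z) / t) ≤ 6 / r * ‖z‖ := by
            have h3 := delta_lip (D := D) (x + z) x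
            rw [dist_eq_norm, add_sub_cancel_left] at h3
            rw [← hle] at hz
            rcases le_total (deltaD D x) r with h4 | h4
            · rw [min_eq_left h4] at hz
              refine (min_le_right _ _).trans ?_
              rw [div_mul_eq_mul_div, div_le_div_iff₀ ht hr]
              calc deltaD D (x + z) * r ≤ (3 * ‖z‖) * (2 * t) :=
                    mul_le_mul (by linarith) (by linarith) hr.le (by positivity)
                _ = 6 * ‖z‖ * t := by ring
            · rw [min_eq_right h4] at hz
              refine (min_le_left _ _).trans ?_
              rw [div_mul_eq_mul_div, one_le_div hr]
              linarith
          have f2 : ‖z‖ ^ (α / 2 - β - (d : ℝ)) = ‖z‖ ^ (α / 2) * ‖z‖ ^ (-(d : ℝ) - β) := by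
            rw [← Real.rpow_add hzp]; congr 1; ring
          rw [f2, ← mul_assoc, ← Real.mul_rpow (by positivity) (by positivity)]
          gcongr
        · refine le_add_of_nonneg_of_le (by positivity) ?_
          rw [radI_mem (show ‖z‖ ∈ Ioi r from h'), show -β - (d : ℝ) = -(d : ℝ) - β by ring]
          refine mul_le_of_le_one_left (by positivity) ?_
          exact Real.rpow_le_one (by positivity) (min_le_left _ _) (by linarith)
      calc _ ≤ (c₀ * (r / 2) ^ (α - (d : ℝ)) * min 1 (deltaD D (x + z) / t) ^ (α / 2)
            * (2 ^ (α / 2) * m)) * ‖z‖ ^ (-(d : ℝ) - β) := by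
            refine mul_le_mul_of_nonneg_right (hB.trans ?_) (by positivity)
            gcongr
        _ = P2 * (min 1 (deltaD D (x + z) / t) ^ (α / 2) * ‖z‖ ^ (-(d : ℝ) - β)) := by
            rw [hP2]; ring
        _ ≤ _ := by gcongr
  have hS : MeasurableSet {z : EuclideanSpace ℝ (Fin d) | l < ‖z‖} :=
    measurableSet_lt measurable_const measurable_norm
  have hae : ∀ᵐ z : EuclideanSpace ℝ (Fin d), z ≠ y - x := by
    have : Nonempty (Fin d) := ⟨⟨0, by omega⟩⟩
    exact Measure.ae_ne volume (y - x)
  rw [← integral_indicator hS]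
  have hgint := ((hi1.const_mul (G x y)).add ((hi2'.const_mul P1).add
    (((hi3.const_mul ((6 / r) ^ (α / 2))).add hi4).const_mul P2))).const_mul A
  have hH1 := one_le_Hf α β M hM
  have hH2 := pow_le_Hf α β M hM
  set H := Hf α β M with hH
  calc _ ≤ ∫ z, A * (G x y * radI d (Ioi l) (-β) z
          + (P1 * radI d (Ioc 0 (r / 2)) (α / 2) (z - (y - x))
          + P2 * ((6 / r) ^ (α / 2) * radI d (Ioc l r) (α / 2 - β) z
            + radI d (Ioi r) (-β) z))) := by
        refine integral_mono_of_nonneg ?_ hgint ?_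
        · filter_upwards [hae] with z hz
          refine Set.indicator_apply_nonneg fun hzl => ?_
          have := (hpt z hz hzl).1
          positivity
        · filter_upwards [hae] with z hz
          have hn0 := radI_nonneg d (Ioi l) (-β) z
          have hn1 := radI_nonneg d (Ioc 0 (r / 2)) (α / 2) (z - (y - x))
          have hn2 := radI_nonneg d (Ioc l r) (α / 2 - β) z
          have hn3 := radI_nonneg d (Ioi r) (-β) z
          refine Set.indicator_apply_le' (fun hzl => ?_) (fun _ => by positivity)
          obtain ⟨q1, q2⟩ := hpt z hz hzl
          have hzl : l < ‖z‖ := hzl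
          beta_reduce
          rw [radI_mem (show ‖z‖ ∈ Ioi l from hzl), show -β - (d : ℝ) = -(d : ℝ) - β by ring]
          calc _ ≤ (G (x + z) y + G x y) * A * ‖z‖ ^ (-(d : ℝ) - β) := by
                have h2 := hb x z
                gcongr
            _ = A * (G x y * ‖z‖ ^ (-(d : ℝ) - β) + G (x + z) y * ‖z‖ ^ (-(d : ℝ) - β)) := by ring
            _ ≤ _ := by gcongr
    _ = A * (G x y * (radK d * (l ^ (-β) / β))
          + (P1 * (radK d * ((r / 2) ^ (α / 2) / (α / 2)))
          + P2 * ((6 / r) ^ (α / 2) * (∫ z, radI d (Ioc l r) (α / 2 - β) z)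
            + radK d * (r ^ (-β) / β)))) := by
        have j1 : Integrable (fun z => P2 * ((6 / r) ^ (α / 2) *
            radI d (Ioc l r) (α / 2 - β) z + radI d (Ioi r) (-β) z)) :=
          ((hi3.const_mul ((6 / r) ^ (α / 2))).add hi4).const_mul P2
        have j2 : Integrable (fun z => P1 * radI d (Ioc 0 (r / 2)) (α / 2) (z - (y - x))
            + P2 * ((6 / r) ^ (α / 2) *
            radI d (Ioc l r) (α / 2 - β) z + radI d (Ioi r) (-β) z)) :=
          (hi2'.const_mul P1).add j1
        rw [integral_const_mul, integral_add (hi1.const_mul _) j2,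
          integral_add (hi2'.const_mul P1) j1,
          integral_const_mul, integral_const_mul, integral_const_mul,
          integral_add (hi3.const_mul _) hi4, integral_const_mul, hv1, hv2', hv4]
    _ ≤ A * ((c₀ * r ^ (α - (d : ℝ)) * M⁻¹ ^ (α / 2) * m) * (radK d * (l ^ (-β) / β))
          + (P1 * (radK d * ((r / 2) ^ (α / 2) / (α / 2)))
          + P2 * ((6 / r) ^ (α / 2) * (C3 * r ^ (α / 2 - β) * H)
            + radK d * (r ^ (-β) / β)))) := by
        gcongr
    _ = A * m * (c₀ * (radK d / β) * (r ^ (α - (d : ℝ)) * M⁻¹ ^ (α / 2) * (r / (2 * M)) ^ (-β))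
          + c₀ * (radK d / (α / 2)) *
            ((r / 2) ^ (-(d : ℝ) - β) * r ^ (α / 2) * (r / 2) ^ (α / 2))
          + c₀ * 2 ^ (α / 2) * C3 * H *
            ((r / 2) ^ (α - (d : ℝ)) * (6 / r) ^ (α / 2) * r ^ (α / 2 - β))
          + c₀ * 2 ^ (α / 2) * (radK d / β) * ((r / 2) ^ (α - (d : ℝ)) * r ^ (-β))) := by
        rw [hP1, hP2, hl]; ring
    _ = A * m * (c₀ * (radK d / β) * ((1 / 2) ^ (-β) * (r ^ (α - β - (d : ℝ)) * M ^ (β - α / 2)))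
          + c₀ * (radK d / (α / 2)) *
            (((1 / 2) ^ (-(d : ℝ) - β) * (1 / 2) ^ (α / 2)) * (r ^ (α - β - (d : ℝ)) * 1))
          + c₀ * 2 ^ (α / 2) * C3 * H *
            (((1 / 2) ^ (α - (d : ℝ)) * 6 ^ (α / 2)) * r ^ (α - β - (d : ℝ)))
          + c₀ * 2 ^ (α / 2) * (radK d / β) *
            ((1 / 2) ^ (α - (d : ℝ)) * (r ^ (α - β - (d : ℝ)) * 1))) := by
        rw [algT1 α β d r M hr hM0, algT2 α β d r hr, algT3 α β d r hr, algT4 α β d r hr, mul_one]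
    _ ≤ A * m * (c₀ * (radK d / β) * ((1 / 2) ^ (-β) * (r ^ (α - β - (d : ℝ)) * H))
          + c₀ * (radK d / (α / 2)) *
            (((1 / 2) ^ (-(d : ℝ) - β) * (1 / 2) ^ (α / 2)) * (r ^ (α - β - (d : ℝ)) * H))
          + c₀ * 2 ^ (α / 2) * C3 * H *
            (((1 / 2) ^ (α - (d : ℝ)) * 6 ^ (α / 2)) * r ^ (α - β - (d : ℝ)))
          + c₀ * 2 ^ (α / 2) * (radK d / β) *
            ((1 / 2) ^ (α - (d : ℝ)) * (r ^ (α - β - (d : ℝ)) * H))) := by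
        gcongr
    _ = _ := by ring

lemma stableConst_nonneg (d : ℕ) (β : ℝ) (hβ : 0 < β) (hβ2 : β < 2) : 0 ≤ stableConst d β := by
  have h1 : 0 < Real.Gamma (((d : ℝ) + β) / 2) := Real.Gamma_pos_of_pos (by positivity)
  have h2 : 0 < Real.Gamma (1 - β / 2) := Real.Gamma_pos_of_pos (by linarith)
  unfold stableConst
  positivity

lemma hKer_eq {d : ℕ} (α β : ℝ) (D : Set (EuclideanSpace ℝ (Fin d)))
    (x y : EuclideanSpace ℝ (Fin d)) :
    hKer α β D x y = ‖x - y‖ ^ (α - β - (d : ℝ)) * min 1 (deltaD D y / ‖x - y‖) ^ (α / 2)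
              * Hf α β (max 1 (‖x - y‖ / deltaD D x)) := by
  unfold hKer Hf
  split_ifs with h1 h2
  · rw [mul_one]
  · have e1 : α - β - (d : ℝ) = β - d := by linarith
    have e2 : α / 2 = β := by linarith
    rw [e1, e2]
    congr 1
    rcases le_total 1 (‖x - y‖ / deltaD D x) with h | h
    · rw [max_eq_right h]
    · rw [max_eq_left h, Real.log_one]
      have h0 : 0 ≤ ‖x - y‖ / deltaD D x := div_nonneg (norm_nonneg _) Metric.infDist_nonneg
      have := Real.log_nonpos h0 h
      rw [max_eq_left (by linarith), max_eq_left (by norm_num)]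
  · rfl

/-- `|𝒮^b_x| G(x,y) ≤ C ‖b‖_∞ h_D(x,y)`. -/
theorem Sb_G_bound (d : ℕ) (hd : 2 ≤ d) (α β : ℝ)
    (hβ : 0 < β) (hβα : β < α) (hα : α < 2)
    (c₀ c₂ : ℝ) (hc₀ : 0 < c₀) (hc₂ : 0 < c₂) :
    ∃ C > 0, ∀ (D : Set (EuclideanSpace ℝ (Fin d))), IsOpen D → Bornology.IsBounded D →
      ∀ G : EuclideanSpace ℝ (Fin d) → EuclideanSpace ℝ (Fin d) → ℝ,
      (∀ x y, x ∉ D ∨ y ∉ D → G x y = 0) →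
      (∀ x ∈ D, ∀ y ∈ D, x ≠ y → 0 ≤ G x y) →
      (∀ y ∈ D, ContDiffOn ℝ 2 (fun w => G w y) (D \ {y})) →
      (∀ x ∈ D, ∀ y ∈ D, x ≠ y →
        G x y ≤ c₀ * ‖x - y‖ ^ (α - (d : ℝ)) * min 1 (deltaD D x / ‖x - y‖) ^ (α / 2)
          * min 1 (deltaD D y / ‖x - y‖) ^ (α / 2)) →
      (∀ x ∈ D, ∀ y ∈ D, x ≠ y → ∀ i j : Fin d,
        |fderiv ℝ (fun w => fderiv ℝ (fun w' => G w' y) w (EuclideanSpace.single i (1 : ℝ))) x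
            (EuclideanSpace.single j (1 : ℝ))|
          ≤ c₂ * ‖x - y‖ ^ (α - (d : ℝ) - 2) * min 1 (deltaD D y / ‖x - y‖) ^ (α / 2)
            * max 1 (‖x - y‖ / deltaD D x) ^ (2 - α / 2)) →
      ∀ (b : EuclideanSpace ℝ (Fin d) → EuclideanSpace ℝ (Fin d) → ℝ) (A : ℝ),
        Measurable (Function.uncurry b) → (∀ x z, |b x z| ≤ A) →
        ∀ x ∈ D, ∀ y ∈ D, x ≠ y →
          stableConst d β *
            ((∫ z in {z : EuclideanSpace ℝ (Fin d) | ‖z‖ ≤ min (deltaD D x) ‖x - y‖ / 2},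
                |G (x + z) y - G x y - fderiv ℝ (fun w => G w y) x z| * |b x z|
                  * ‖z‖ ^ (-(d : ℝ) - β))
              + ∫ z in {z : EuclideanSpace ℝ (Fin d) | min (deltaD D x) ‖x - y‖ / 2 < ‖z‖},
                  (G (x + z) y + G x y) * |b x z| * ‖z‖ ^ (-(d : ℝ) - β))
            ≤ C * A * hKer α β D x y := by
  obtain ⟨C1, hC1, h1⟩ := step1 d hd α β hβ hβα hα c₂ hc₂
  obtain ⟨C2, hC2, h2⟩ := step2 d hd α β hβ hβα hα c₀ hc₀
  have hs := stableConst_nonneg d β hβ (by linarith)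
  refine ⟨stableConst d β * (C1 + C2) + 1, by positivity, ?_⟩
  intro D hD hDb G hG0 hGn hGc hGb hG2 b A _ hb x hx y hy hxy
  have hA : 0 ≤ A := (abs_nonneg _).trans (hb x x)
  have k1 := h1 D hD hDb G hGc hG2 b A hb x hx y hy hxy
  have k2 := h2 D hD hDb G hG0 hGn hGb b A hb x hx y hy hxy
  rw [← hKer_eq] at k1 k2
  have hk : 0 ≤ hKer α β D x y := by
    rw [hKer_eq]
    have hH := one_le_Hf α β (max 1 (‖x - y‖ / deltaD D x)) (le_max_left _ _)
    have h0 : 0 ≤ deltaD D y := delta_nonneg y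
    have : 0 ≤ Hf α β (max 1 (‖x - y‖ / deltaD D x)) := by linarith
    positivity
  calc _ ≤ stableConst d β * (C1 * A * hKer α β D x y + C2 * A * hKer α β D x y) :=
        mul_le_mul_of_nonneg_left (add_le_add k1 k2) hs
    _ ≤ stableConst d β * (C1 * A * hKer α β D x y + C2 * A * hKer α β D x y)
        + A * hKer α β D x y := le_add_of_nonneg_right (by positivity)
    _ = _ := by ring
end
end

section
/- Let d ≥ 2 and 0 < β < α < 2. Then there exists a constant c = c(d, α, β) > 0 such that for every ball B = B(x₀, r) ⊂ ℝ^d with r > 0 and all distinct x, y ∈ B: ∫_B h_B(x,z)·h_B(z,y) dz ≤ c·r^{α−β}·h_B(x,y). -/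
open MeasureTheory Metric Set

noncomputable section

/-- the kernel `g_D(x,y)`, comparable to the Green function of the killed
symmetric `α`-stable process in `D` -/
def gKer {d : ℕ} (α : ℝ) (D : Set (EuclideanSpace ℝ (Fin d)))
    (x y : EuclideanSpace ℝ (Fin d)) : ℝ :=
  ‖x - y‖ ^ (α - (d : ℝ)) * min 1 (deltaD D x / ‖x - y‖) ^ (α / 2)
    * min 1 (deltaD D y / ‖x - y‖) ^ (α / 2)

lemma rat1 {a b ρ v w : ℝ} (ha : 0 < a) (hb : 0 < b) (hρ : 0 < ρ) (hv : 0 < v) (hw : 0 < w)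
    (h1 : b ≤ ρ / 2) (h2 : ρ ≤ a + b) (h3 : w ≤ v + b) :
    min 1 (w / a) * min 1 (v / b) * max 1 (b / w) ≤ 4 * min 1 (v / ρ) := by
  have ha2 : ρ / 2 ≤ a := by linarith
  have e1 : 0 < w / a := by positivity
  have e2 : 0 < v / b := by positivity
  have m1 : 0 < min 1 (w / a) := by positivity
  have m2 : 0 < min 1 (v / b) := by positivity
  have hva : v / a ≤ 2 * (v / ρ) := by
    rw [div_le_iff₀ ha]
    have : v = 2 * (v / ρ) * (ρ / 2) := by field_simp
    calc v = 2 * (v / ρ) * (ρ / 2) := this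
      _ ≤ _ := by gcongr
  have hvρ : 0 < v / ρ := by positivity
  rw [mul_min_of_nonneg _ _ (by norm_num : (0 : ℝ) ≤ 4)]
  rcases le_or_gt b w with hbw | hbw
  · rw [max_eq_left (by rw [div_le_one hw]; exact hbw), mul_one]
    apply le_min
    · nlinarith [min_le_left 1 (w / a), min_le_left 1 (v / b)]
    · rcases le_or_gt b v with hbv | hbv
      · have : w / a ≤ 2 * (v / a) := by
          rw [← mul_div_assoc]; gcongr; linarith
        calc min 1 (w / a) * min 1 (v / b) ≤ (w / a) * 1 := by
              gcongr
              · exact min_le_right _ _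
              · exact min_le_left _ _
          _ ≤ _ := by linarith
      · calc min 1 (w / a) * min 1 (v / b) ≤ (2 * b / a) * (v / b) := by
              gcongr
              · exact (min_le_right _ _).trans (by gcongr; linarith)
              · exact min_le_right _ _
          _ = 2 * (v / a) := by field_simp
          _ ≤ _ := by linarith
  · rw [max_eq_right (by rw [le_div_iff₀ hw]; linarith)]
    apply le_min
    · calc min 1 (w / a) * min 1 (v / b) * (b / w) ≤ (w / a) * 1 * (b / w) := by
              gcongr
              · exact min_le_right _ _
              · exact min_le_left _ _
        _ = b / a := by field_simp
        _ ≤ 1 := by rw [div_le_one ha]; linarith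
        _ ≤ 4 * 1 := by norm_num
    · calc min 1 (w / a) * min 1 (v / b) * (b / w) ≤ (w / a) * (v / b) * (b / w) := by
              gcongr
              · exact min_le_right _ _
              · exact min_le_right _ _
        _ = v / a := by field_simp
        _ ≤ _ := by linarith

lemma rat2 {a b w : ℝ} (ha : 0 < a) (hb : 0 < b) (hw : 0 < w) :
    min 1 (w / a) * max 1 (b / w) ≤ max 1 (b / a) := by
  have e1 : 0 < w / a := by positivity
  rcases le_or_gt b w with hbw | hbw
  · rw [max_eq_left (by rw [div_le_one hw]; exact hbw), mul_one]
    exact (min_le_left _ _).trans (le_max_left _ _)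
  · rw [max_eq_right (by rw [le_div_iff₀ hw]; linarith)]
    refine le_trans ?_ (le_max_right _ _)
    calc min 1 (w / a) * (b / w) ≤ (w / a) * (b / w) := by
          gcongr
          exact min_le_right _ _
      _ = b / a := by field_simp

lemma min_scale {v b ρ : ℝ} (hv : 0 < v) (hb : 0 < b) (hρ : 0 < ρ) (h : ρ / 2 ≤ b) :
    min 1 (v / b) ≤ 2 * min 1 (v / ρ) := by
  rw [mul_min_of_nonneg _ _ (by norm_num : (0 : ℝ) ≤ 2)]
  refine min_le_min (by norm_num) ?_
  rw [div_le_iff₀ hb]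
  calc v = 2 * (v / ρ) * (ρ / 2) := by field_simp
    _ ≤ _ := by gcongr

lemma pow_scale {a ρ e : ℝ} (hρ : 0 < ρ) (he : e ≤ 0) (h : ρ / 2 ≤ a) :
    a ^ e ≤ 2 ^ (-e) * ρ ^ e := by
  have : (2 : ℝ) ^ (-e) * ρ ^ e = (ρ / 2) ^ e := by
    rw [Real.div_rpow hρ.le (by norm_num), Real.rpow_neg (by norm_num)]; field_simp
  rw [this]
  exact Real.rpow_le_rpow_of_nonpos (by positivity) h he

lemma slack {a R γ η D : ℝ} (ha : 0 < a) (h : a ≤ R) (hη : 0 ≤ η) :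
    a ^ (γ - D) ≤ R ^ η * a ^ (γ - η - D) := by
  have : a ^ (γ - D) = a ^ η * a ^ (γ - η - D) := by
    rw [← Real.rpow_add ha]; congr 1; ring
  rw [this]; gcongr

structure Good (p κ γ η D K : ℝ) (Φ : ℝ → ℝ) : Prop where
  κ0 : 0 ≤ κ
  κp : κ ≤ p
  γκ : γ + κ ≤ D
  η0 : 0 ≤ η
  K1 : 1 ≤ K
  one : ∀ t, 0 < t → 1 ≤ Φ t
  mono : ∀ s t, 0 < s → s ≤ t → Φ s ≤ Φ t
  P2 : ∀ s t, 1 ≤ s → 0 < t → Φ (s * t) ≤ K * s ^ κ * Φ t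
  P3 : ∀ s t, 1 / 2 ≤ s → 1 / 2 ≤ t → Φ s * Φ t ≤ K * max 1 s ^ η * Φ (s * t)

section
variable {p κ γ η D K : ℝ} {Φ : ℝ → ℝ}

lemma Good.max_bound (G : Good p κ γ η D K Φ) {t : ℝ} (ht : 0 < t) :
    Φ t ≤ K * Φ 1 * max 1 t ^ p := by
  have h1 := G.one 1 one_pos
  have hm : (1 : ℝ) ≤ max 1 t := le_max_left _ _
  have hK := G.K1
  calc Φ t ≤ Φ (max 1 t * 1) := G.mono _ _ ht (by simp)
    _ ≤ K * max 1 t ^ κ * Φ 1 := G.P2 _ _ hm one_pos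
    _ ≤ K * max 1 t ^ p * Φ 1 := by
      gcongr
      exact G.κp
    _ = _ := by ring

lemma case1 (G : Good p κ γ η D K Φ) {a b ρ u v w R : ℝ} (ha : 0 < a) (hb : 0 < b) (hρ : 0 < ρ)
    (hu : 0 < u) (hv : 0 < v) (hw : 0 < w)
    (h1 : b ≤ ρ / 2) (h2 : ρ ≤ a + b) (h3 : a ≤ ρ + b) (h4 : w ≤ v + b) (hbR : b ≤ R) :
    (a ^ (γ - D) * min 1 (w / a) ^ p * Φ (a / u)) *
      (b ^ (γ - D) * min 1 (v / b) ^ p * Φ (b / w)) ≤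
    (2 ^ (-(γ - D)) * (K * 2 ^ κ) * (K * Φ 1 * 4 ^ p)) *
      (R ^ η * (ρ ^ (γ - D) * min 1 (v / ρ) ^ p * Φ (ρ / u)) * b ^ (γ - η - D)) := by
  have hp : 0 ≤ p := G.κ0.trans G.κp
  have hK := G.K1
  have hΦ1 := G.one 1 one_pos
  have i1 : a ^ (γ - D) ≤ 2 ^ (-(γ - D)) * ρ ^ (γ - D) :=
    pow_scale hρ (by linarith [G.γκ, G.κ0]) (by linarith)
  have i2 : Φ (a / u) ≤ K * 2 ^ κ * Φ (ρ / u) := by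
    refine (G.mono _ (2 * (ρ / u)) (by positivity) ?_).trans (G.P2 _ _ (by norm_num) (by positivity))
    rw [← mul_div_assoc]; gcongr; linarith
  have i3 : min 1 (w / a) ^ p * min 1 (v / b) ^ p * Φ (b / w) ≤
      K * Φ 1 * 4 ^ p * min 1 (v / ρ) ^ p := by
    have m1 : 0 < min 1 (w / a) := by positivity
    have m2 : 0 < min 1 (v / b) := by positivity
    have m3 : 0 < min 1 (v / ρ) := by positivity
    have m4 : 0 < max 1 (b / w) := by positivity
    calc min 1 (w / a) ^ p * min 1 (v / b) ^ p * Φ (b / w)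
        ≤ min 1 (w / a) ^ p * min 1 (v / b) ^ p * (K * Φ 1 * max 1 (b / w) ^ p) := by
          gcongr
          exact G.max_bound (by positivity)
      _ = K * Φ 1 * (min 1 (w / a) * min 1 (v / b) * max 1 (b / w)) ^ p := by
          rw [Real.mul_rpow (by positivity) (by positivity),
            Real.mul_rpow (by positivity) (by positivity)]; ring
      _ ≤ K * Φ 1 * (4 * min 1 (v / ρ)) ^ p := by
          refine mul_le_mul_of_nonneg_left (Real.rpow_le_rpow (by positivity) ?_ hp) (by positivity)
          exact rat1 ha hb hρ hv hw h1 h2 h4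
      _ = _ := by rw [Real.mul_rpow (by norm_num) (by positivity)]; ring
  have i4 : b ^ (γ - D) ≤ R ^ η * b ^ (γ - η - D) := slack hb hbR G.η0
  have f1 := G.one (a / u) (by positivity)
  have f2 := G.one (b / w) (by positivity)
  have f3 := G.one (ρ / u) (by positivity)
  calc _ = a ^ (γ - D) * Φ (a / u) * (min 1 (w / a) ^ p * min 1 (v / b) ^ p * Φ (b / w))
        * b ^ (γ - D) := by ring
    _ ≤ (2 ^ (-(γ - D)) * ρ ^ (γ - D)) * (K * 2 ^ κ * Φ (ρ / u)) *
        (K * Φ 1 * 4 ^ p * min 1 (v / ρ) ^ p) * (R ^ η * b ^ (γ - η - D)) := by gcongr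
    _ = _ := by ring

lemma case2 (G : Good p κ γ η D K Φ) {a b ρ u v w R : ℝ} (ha : 0 < a) (hb : 0 < b) (hρ : 0 < ρ)
    (hu : 0 < u) (hv : 0 < v) (hw : 0 < w)
    (h1 : 2 * ρ ≤ a) (h2 : a ≤ ρ + b) (h3 : b ≤ ρ + a) (haR : a ≤ R) :
    (a ^ (γ - D) * min 1 (w / a) ^ p * Φ (a / u)) *
      (b ^ (γ - D) * min 1 (v / b) ^ p * Φ (b / w)) ≤
    (2 ^ (-(γ - D)) * K * (K * Φ 1 * 2 ^ p)) *
      (R ^ η * (ρ ^ (γ - D) * min 1 (v / ρ) ^ p * Φ (ρ / u)) * a ^ (γ - η - D)) := by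
  have hp : 0 ≤ p := G.κ0.trans G.κp
  have hK := G.K1
  have hΦ1 := G.one 1 one_pos
  have hR : 0 < R := by linarith
  have i1 : b ^ (γ - D) ≤ 2 ^ (-(γ - D)) * a ^ (γ - D) :=
    pow_scale ha (by linarith [G.γκ, G.κ0]) (by linarith)
  have hr : 1 ≤ a / ρ := by rw [le_div_iff₀ hρ]; linarith
  have i2 : Φ (a / u) ≤ K * (a / ρ) ^ κ * Φ (ρ / u) := by
    have : a / u = (a / ρ) * (ρ / u) := by field_simp
    rw [this]
    exact G.P2 _ _ hr (by positivity)
  have i5 : a ^ (γ - D) * (a / ρ) ^ κ ≤ ρ ^ (γ - D) := by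
    have : a = ρ * (a / ρ) := by field_simp
    calc a ^ (γ - D) * (a / ρ) ^ κ = (ρ * (a / ρ)) ^ (γ - D) * (a / ρ) ^ κ := by rw [← this]
      _ = ρ ^ (γ - D) * (a / ρ) ^ (γ - D + κ) := by
        rw [Real.mul_rpow (by positivity) (by positivity), Real.rpow_add (by positivity)]; ring
      _ ≤ ρ ^ (γ - D) * 1 := by
        gcongr
        exact Real.rpow_le_one_of_one_le_of_nonpos hr (by linarith [G.γκ])
      _ = _ := mul_one _
  have m1 : 0 < min 1 (w / a) := by positivity
  have m2 : 0 < min 1 (v / b) := by positivity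
  have m3 : 0 < min 1 (v / ρ) := by positivity
  have m4 : 0 < max 1 (b / w) := by positivity
  have i3 : min 1 (w / a) ^ p * Φ (b / w) ≤ K * Φ 1 * 2 ^ p := by
    calc min 1 (w / a) ^ p * Φ (b / w)
        ≤ min 1 (w / a) ^ p * (K * Φ 1 * max 1 (b / w) ^ p) := by
          gcongr
          exact G.max_bound (by positivity)
      _ = K * Φ 1 * (min 1 (w / a) * max 1 (b / w)) ^ p := by
          rw [Real.mul_rpow (by positivity) (by positivity)]; ring
      _ ≤ K * Φ 1 * 2 ^ p := by
          gcongr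
          refine (rat2 ha hb hw).trans (max_le (by norm_num) ?_)
          rw [div_le_iff₀ ha]; linarith
  have i6 : min 1 (v / b) ^ p ≤ min 1 (v / ρ) ^ p := by
    gcongr
    linarith
  have i4 : a ^ (γ - D) ≤ R ^ η * a ^ (γ - η - D) := slack ha haR G.η0
  have f1 := G.one (a / u) (by positivity)
  have f2 := G.one (b / w) (by positivity)
  have f3 := G.one (ρ / u) (by positivity)
  calc _ = a ^ (γ - D) * Φ (a / u) * (min 1 (w / a) ^ p * Φ (b / w)) * min 1 (v / b) ^ p
        * b ^ (γ - D) := by ring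
    _ ≤ (R ^ η * a ^ (γ - η - D)) * (K * (a / ρ) ^ κ * Φ (ρ / u)) *
        (K * Φ 1 * 2 ^ p) * min 1 (v / ρ) ^ p * (2 ^ (-(γ - D)) * a ^ (γ - D)) := by gcongr
    _ = (R ^ η * a ^ (γ - η - D)) * (K * Φ (ρ / u)) *
        (K * Φ 1 * 2 ^ p) * min 1 (v / ρ) ^ p * 2 ^ (-(γ - D)) *
        (a ^ (γ - D) * (a / ρ) ^ κ) := by ring
    _ ≤ (R ^ η * a ^ (γ - η - D)) * (K * Φ (ρ / u)) *
        (K * Φ 1 * 2 ^ p) * min 1 (v / ρ) ^ p * 2 ^ (-(γ - D)) *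
        (ρ ^ (γ - D)) := by gcongr
    _ = _ := by ring

lemma case3_aux (G : Good p κ γ η D K Φ) {a b ρ u w : ℝ} (ha : 0 < a) (hb : 0 < b) (hρ : 0 < ρ)
    (hu : 0 < u) (hw : 0 < w)
    (h1 : a ≤ 2 * ρ) (h3 : b ≤ ρ + a) (h4 : u ≤ w + a) :
    min 1 (w / a) ^ p * Φ (b / w) * Φ (a / u) ≤
      (K * 6 ^ κ * Φ 1 + K * K * 3 ^ κ * K) * (max 1 (ρ / a) ^ η * Φ (ρ / u)) := by
  have hp : 0 ≤ p := G.κ0.trans G.κp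
  have hK := G.K1
  have hΦ1 := G.one 1 one_pos
  have f1 := G.one (a / u) (by positivity)
  have f2 := G.one (b / w) (by positivity)
  have f3 := G.one (ρ / u) (by positivity)
  have f4 := G.one (ρ / a) (by positivity)
  have m1 : 0 < min 1 (w / a) := by positivity
  have m1' : min 1 (w / a) ^ p ≤ 1 := Real.rpow_le_one m1.le (min_le_left _ _) hp
  have hM : 1 ≤ max 1 (ρ / a) ^ η := Real.one_le_rpow (le_max_left _ _) G.η0
  rcases le_or_gt (2 * a) u with hau | hau
  · have hwu : u / 2 ≤ w := by linarith
    have i1 : Φ (b / w) ≤ K * 6 ^ κ * Φ (ρ / u) := by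
      refine (G.mono _ (6 * (ρ / u)) (by positivity) ?_).trans
        (G.P2 _ _ (by norm_num) (by positivity))
      calc b / w ≤ (3 * ρ) / (u / 2) := by gcongr; linarith
        _ = _ := by field_simp; norm_num
    have i2 : Φ (a / u) ≤ Φ 1 := G.mono _ _ (by positivity) (by rw [div_le_one hu]; linarith)
    calc min 1 (w / a) ^ p * Φ (b / w) * Φ (a / u) ≤ 1 * (K * 6 ^ κ * Φ (ρ / u)) * Φ 1 := by
          gcongr
      _ = (K * 6 ^ κ * Φ 1) * (1 * Φ (ρ / u)) := by ring
      _ ≤ _ := by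
        gcongr
        have : 0 ≤ K * K * 3 ^ κ * K := by positivity
        linarith
  · have i1 : min 1 (w / a) ^ p * Φ (b / w) ≤ K * Φ (3 * (ρ / a)) := by
      have f5 := G.one (3 * (ρ / a)) (by positivity)
      rcases le_or_gt a w with haw | haw
      · calc min 1 (w / a) ^ p * Φ (b / w) ≤ 1 * Φ (3 * (ρ / a)) := by
              gcongr
              apply G.mono _ _ (by positivity)
              rw [← mul_div_assoc]
              gcongr
              linarith
          _ ≤ _ := by gcongr
      · have h1a : 1 ≤ a / w := by rw [le_div_iff₀ hw]; linarith
        have : Φ (b / w) ≤ K * (a / w) ^ κ * Φ (3 * (ρ / a)) := by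
          refine (G.mono _ ((a / w) * (3 * (ρ / a))) (by positivity) ?_).trans
            (G.P2 _ _ h1a (by positivity))
          calc b / w ≤ (3 * ρ) / w := by gcongr; linarith
            _ = _ := by field_simp
        calc min 1 (w / a) ^ p * Φ (b / w) ≤
              (w / a) ^ p * (K * (a / w) ^ p * Φ (3 * (ρ / a))) := by
              gcongr
              · exact min_le_right _ _
              · exact this.trans (by gcongr; exact G.κp)
          _ = ((w / a) * (a / w)) ^ p * (K * Φ (3 * (ρ / a))) := by
              rw [Real.mul_rpow (by positivity) (by positivity)]; ring
          _ = _ := by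
            rw [show (w / a) * (a / w) = 1 by field_simp, Real.one_rpow, one_mul]
    have i2 : Φ (3 * (ρ / a)) ≤ K * 3 ^ κ * Φ (ρ / a) :=
      G.P2 _ _ (by norm_num) (by positivity)
    have i3 := G.P3 (ρ / a) (a / u) (by rw [le_div_iff₀ ha]; linarith)
      (by rw [le_div_iff₀ hu]; linarith)
    rw [show ρ / a * (a / u) = ρ / u by field_simp] at i3
    calc min 1 (w / a) ^ p * Φ (b / w) * Φ (a / u)
        ≤ (K * (K * 3 ^ κ * Φ (ρ / a))) * Φ (a / u) := by
          refine mul_le_mul_of_nonneg_right ?_ (by positivity)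
          exact i1.trans (by gcongr)
      _ = (K * K * 3 ^ κ) * (Φ (ρ / a) * Φ (a / u)) := by ring
      _ ≤ (K * K * 3 ^ κ) * (K * max 1 (ρ / a) ^ η * Φ (ρ / u)) := by gcongr
      _ = (K * K * 3 ^ κ * K) * (max 1 (ρ / a) ^ η * Φ (ρ / u)) := by ring
      _ ≤ _ := by
        gcongr
        have : 0 ≤ K * 6 ^ κ * Φ 1 := by positivity
        linarith

lemma case3 (G : Good p κ γ η D K Φ) {a b ρ u v w R : ℝ} (ha : 0 < a) (hb : 0 < b) (hρ : 0 < ρ)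
    (hu : 0 < u) (hv : 0 < v) (hw : 0 < w)
    (h0 : ρ / 2 ≤ b) (h1 : a ≤ 2 * ρ) (h3 : b ≤ ρ + a) (h4 : u ≤ w + a)
    (haR : a ≤ R) (hρR : ρ ≤ R) :
    (a ^ (γ - D) * min 1 (w / a) ^ p * Φ (a / u)) *
      (b ^ (γ - D) * min 1 (v / b) ^ p * Φ (b / w)) ≤
    (2 ^ (-(γ - D)) * 2 ^ p * (K * 6 ^ κ * Φ 1 + K * K * 3 ^ κ * K)) *
      (R ^ η * (ρ ^ (γ - D) * min 1 (v / ρ) ^ p * Φ (ρ / u)) * a ^ (γ - η - D)) := by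
  have hp : 0 ≤ p := G.κ0.trans G.κp
  have hK := G.K1
  have hη := G.η0
  have hΦ1 := G.one 1 one_pos
  have f1 := G.one (a / u) (by positivity)
  have f2 := G.one (b / w) (by positivity)
  have f3 := G.one (ρ / u) (by positivity)
  have m1 : 0 < min 1 (w / a) := by positivity
  have m2 : 0 < min 1 (v / b) := by positivity
  have m3 : 0 < min 1 (v / ρ) := by positivity
  have i1 : b ^ (γ - D) ≤ 2 ^ (-(γ - D)) * ρ ^ (γ - D) :=
    pow_scale hρ (by linarith [G.γκ, G.κ0]) (by linarith)
  have i2 : min 1 (v / b) ^ p ≤ 2 ^ p * min 1 (v / ρ) ^ p := by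
    rw [← Real.mul_rpow (by norm_num) m3.le]
    gcongr
    exact min_scale hv hb hρ h0
  have i3 : a ^ (γ - D) * max 1 (ρ / a) ^ η ≤ R ^ η * a ^ (γ - η - D) := by
    have hR : 0 < R := by linarith
    calc a ^ (γ - D) * max 1 (ρ / a) ^ η ≤ a ^ (γ - D) * (R / a) ^ η := by
          gcongr
          apply max_le
          · rw [le_div_iff₀ ha]; linarith
          · gcongr
      _ = _ := by
        rw [Real.div_rpow hR.le ha.le, show γ - D = η + (γ - η - D) by ring, Real.rpow_add ha]
        field_simp
  have i4 := case3_aux G ha hb hρ hu hw h1 h3 h4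
  set C := (K * 6 ^ κ * Φ 1 + K * K * 3 ^ κ * K) with hC
  have hC0 : 0 ≤ C := by positivity
  calc _ = a ^ (γ - D) * (min 1 (w / a) ^ p * Φ (b / w) * Φ (a / u)) * b ^ (γ - D) *
        min 1 (v / b) ^ p := by ring
    _ ≤ a ^ (γ - D) * (C * (max 1 (ρ / a) ^ η * Φ (ρ / u))) * (2 ^ (-(γ - D)) * ρ ^ (γ - D)) *
        (2 ^ p * min 1 (v / ρ) ^ p) := by gcongr
    _ = (a ^ (γ - D) * max 1 (ρ / a) ^ η) * (C * Φ (ρ / u)) * (2 ^ (-(γ - D)) * ρ ^ (γ - D)) *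
        (2 ^ p * min 1 (v / ρ) ^ p) := by ring
    _ ≤ (R ^ η * a ^ (γ - η - D)) * (C * Φ (ρ / u)) * (2 ^ (-(γ - D)) * ρ ^ (γ - D)) *
        (2 ^ p * min 1 (v / ρ) ^ p) := by gcongr
    _ = _ := by ring

lemma ptwise (G : Good p κ γ η D K Φ) : ∃ C > 0, ∀ a b ρ u v w R : ℝ, 0 < a → 0 < b → 0 < ρ →
    0 < u → 0 < v → 0 < w → ρ ≤ a + b → a ≤ ρ + b → b ≤ ρ + a → u ≤ w + a → w ≤ v + b →
    a ≤ R → b ≤ R → ρ ≤ R →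
    (a ^ (γ - D) * min 1 (w / a) ^ p * Φ (a / u)) *
      (b ^ (γ - D) * min 1 (v / b) ^ p * Φ (b / w)) ≤
    C * (R ^ η * (ρ ^ (γ - D) * min 1 (v / ρ) ^ p * Φ (ρ / u)) *
      (a ^ (γ - η - D) + b ^ (γ - η - D))) := by
  have hK := G.K1
  have hΦ1 := G.one 1 one_pos
  set C1 := (2 ^ (-(γ - D)) * (K * 2 ^ κ) * (K * Φ 1 * 4 ^ p)) with hC1
  set C2 := (2 ^ (-(γ - D)) * K * (K * Φ 1 * 2 ^ p)) with hC2
  set C3 := (2 ^ (-(γ - D)) * 2 ^ p * (K * 6 ^ κ * Φ 1 + K * K * 3 ^ κ * K)) with hC3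
  have p1 : 0 < C1 := by positivity
  have p2 : 0 < C2 := by positivity
  have p3 : 0 < C3 := by positivity
  refine ⟨C1 + C2 + C3, by positivity, ?_⟩
  intro a b ρ u v w R ha hb hρ hu hv hw t1 t2 t3 l1 l2 haR hbR hρR
  have f3 := G.one (ρ / u) (by positivity)
  have hR : 0 < R := by linarith
  have q1 : 0 < a ^ (γ - η - D) := by positivity
  have q2 : 0 < b ^ (γ - η - D) := by positivity
  have m3 : 0 < min 1 (v / ρ) := by positivity
  rcases le_or_gt b (ρ / 2) with hbρ | hbρ
  · refine (case1 G ha hb hρ hu hv hw hbρ t1 t2 l2 hbR).trans ?_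
    gcongr
    · linarith
    · linarith
  rcases le_or_gt a (2 * ρ) with haρ | haρ
  · refine (case3 G ha hb hρ hu hv hw hbρ.le haρ t3 l1 haR hρR).trans ?_
    gcongr
    · linarith
    · linarith
  · refine (case2 G ha hb hρ hu hv hw haρ.le t2 t3 haR).trans ?_
    gcongr
    · linarith
    · linarith
end

lemma goodA {α β D : ℝ} (hβ : 0 < β) (hβα : β < α) (hα : α < 2) (hD : 2 ≤ D) :
    Good (α / 2) 0 (α - β) ((α - β) / 2) D 1 (fun _ => 1) where
  κ0 := le_rfl
  κp := by linarith
  γκ := by linarith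
  η0 := by linarith
  K1 := le_rfl
  one := fun _ _ => le_rfl
  mono := fun _ _ _ _ => le_rfl
  P2 := fun s t _ _ => by simp
  P3 := fun s t _ _ => by
    simp only [mul_one, one_mul]
    exact Real.one_le_rpow (le_max_left _ _) (by linarith)

lemma logP2 {β s t : ℝ} (hβ : 0 < β) (hs : 1 ≤ s) (ht : 0 < t) :
    max 1 (Real.log (s * t)) ≤ (1 + 1 / β) * s ^ β * max 1 (Real.log t) := by
  have hs0 : 0 < s := by linarith
  have h1 : 1 ≤ s ^ β := Real.one_le_rpow hs hβ.le
  have h2 : Real.log s ≤ s ^ β / β := Real.log_le_rpow_div hs0.le hβ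
  have h3 : 1 ≤ max 1 (Real.log t) := le_max_left _ _
  have h4 : Real.log t ≤ max 1 (Real.log t) := le_max_right _ _
  have h5 : 0 ≤ 1 / β := by positivity
  rw [Real.log_mul hs0.ne' ht.ne']
  set L := max 1 (Real.log t)
  have h6 : L ≤ s ^ β * L := le_mul_of_one_le_left (by linarith) h1
  have h7 : s ^ β / β ≤ 1 / β * s ^ β * L := by
    calc s ^ β / β = 1 / β * s ^ β * 1 := by ring
      _ ≤ _ := by gcongr
  have h8 : 0 ≤ s ^ β / β := by positivity
  have h9 : (1 + 1 / β) * s ^ β * L = s ^ β * L + 1 / β * s ^ β * L := by ring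
  rw [h9]
  apply max_le <;> linarith

lemma goodB {β D : ℝ} (hβ : 0 < β) (hβ1 : β < 1) (hD : 2 ≤ D) :
    Good β β β (β / 2) D ((1 + 2 / β) * ((1 + 1 / β) * 2 ^ β))
      (fun t => max 1 (Real.log t)) := by
  have k1 : (1 : ℝ) ≤ 1 + 2 / β := by have : 0 < 2 / β := by positivity
                                      linarith
  have k2 : (1 : ℝ) ≤ 1 + 1 / β := by have : 0 < 1 / β := by positivity
                                      linarith
  have k3 : (1 : ℝ) ≤ 2 ^ β := Real.one_le_rpow (by norm_num) hβ.le
  have k4 : 1 + 1 / β ≤ (1 + 2 / β) * ((1 + 1 / β) * 2 ^ β) := by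
    calc 1 + 1 / β = 1 * ((1 + 1 / β) * 1) := by ring
      _ ≤ _ := by gcongr
  refine ⟨hβ.le, le_rfl, by linarith, by linarith, by linarith, fun _ _ => le_max_left _ _, ?_, ?_, ?_⟩
  · intro s t hs hst
    exact max_le_max le_rfl (Real.log_le_log hs hst)
  · intro s t hs ht
    refine (logP2 hβ hs ht).trans ?_
    have : 0 < s := by linarith
    gcongr
  · intro s t hs ht
    have hs0 : 0 < s := by linarith
    have ht0 : 0 < t := by linarith
    have i1 : max 1 (Real.log s) ≤ (1 + 2 / β) * max 1 s ^ (β / 2) := by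
      have e1 : 1 ≤ max 1 s ^ (β / 2) := Real.one_le_rpow (le_max_left _ _) (by linarith)
      have e2 : Real.log s ≤ max 1 s ^ (β / 2) / (β / 2) :=
        (Real.log_le_log hs0 (le_max_right _ _)).trans
          (Real.log_le_rpow_div (by positivity) (by positivity))
      have e3 : max 1 s ^ (β / 2) / (β / 2) = 2 / β * max 1 s ^ (β / 2) := by field_simp
      have e4 : 0 ≤ 2 / β * max 1 s ^ (β / 2) := by positivity
      rw [add_mul, one_mul]
      apply max_le <;> linarith
    have i2 : max 1 (Real.log t) ≤ (1 + 1 / β) * 2 ^ β * max 1 (Real.log (s * t)) := by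
      refine le_trans (max_le_max le_rfl (Real.log_le_log ht0 (?_ : t ≤ 2 * (s * t))))
        (logP2 hβ (by norm_num) (by positivity))
      nlinarith
    calc max 1 (Real.log s) * max 1 (Real.log t) ≤ ((1 + 2 / β) * max 1 s ^ (β / 2)) *
          ((1 + 1 / β) * 2 ^ β * max 1 (Real.log (s * t))) := by gcongr
      _ = _ := by ring

lemma goodC {α β D : ℝ} (h : α < 2 * β) (hβα : β < α) (hα : α < 2) (hD : 2 ≤ D) :
    Good (α / 2) (β - α / 2) (α - β) ((α - β) / 2) D (4 ^ (β - α / 2))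
      (fun t => max 1 t ^ (β - α / 2)) := by
  have hκ : 0 ≤ β - α / 2 := by linarith
  have k1 : (1 : ℝ) ≤ 4 ^ (β - α / 2) := Real.one_le_rpow (by norm_num) hκ
  refine ⟨hκ, by linarith, by linarith, by linarith, k1,
    fun _ _ => Real.one_le_rpow (le_max_left _ _) hκ, ?_, ?_, ?_⟩
  · intro s t hs hst
    exact Real.rpow_le_rpow (by positivity) (max_le_max le_rfl hst) hκ
  · intro s t hs ht
    have hs0 : 0 < s := by linarith
    have : max 1 (s * t) ≤ s * max 1 t := by
      apply max_le
      · nlinarith [le_max_left 1 t]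
      · gcongr
        exact le_max_right _ _
    calc max 1 (s * t) ^ (β - α / 2) ≤ (s * max 1 t) ^ (β - α / 2) := by gcongr
      _ = 1 * s ^ (β - α / 2) * max 1 t ^ (β - α / 2) := by
        rw [Real.mul_rpow (by positivity) (by positivity)]; ring
      _ ≤ _ := by gcongr
  · intro s t hs ht
    have hs0 : 0 < s := by linarith
    have ht0 : 0 < t := by linarith
    have e1 : 1 ≤ max 1 s ^ ((α - β) / 2) := Real.one_le_rpow (le_max_left _ _) (by linarith)
    have a1 : max 1 s ≤ 2 * s := max_le (by linarith) (by linarith)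
    have a2 : max 1 t ≤ 2 * t := max_le (by linarith) (by linarith)
    have : max 1 s * max 1 t ≤ 4 * max 1 (s * t) := by
      calc max 1 s * max 1 t ≤ (2 * s) * (2 * t) := by gcongr
        _ = 4 * (s * t) := by ring
        _ ≤ _ := by gcongr; exact le_max_right _ _
    calc max 1 s ^ (β - α / 2) * max 1 t ^ (β - α / 2) = (max 1 s * max 1 t) ^ (β - α / 2) := by
          rw [Real.mul_rpow (by positivity) (by positivity)]
      _ ≤ (4 * max 1 (s * t)) ^ (β - α / 2) := Real.rpow_le_rpow (by positivity) this hκ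
      _ = 4 ^ (β - α / 2) * 1 * max 1 (s * t) ^ (β - α / 2) := by
          rw [Real.mul_rpow (by positivity) (by positivity)]; ring
      _ ≤ _ := by gcongr

lemma radial (d : ℕ) (hd : 2 ≤ d) {s : ℝ} (hs : 0 < s) :
    ∃ C > 0, ∀ (x₀ : EuclideanSpace ℝ (Fin d)) (r : ℝ), 0 < r → ∀ x ∈ Metric.ball x₀ r,
      IntegrableOn (fun z => ‖x - z‖ ^ (s - (d : ℝ))) (Metric.ball x₀ r) ∧
      ∫ z in Metric.ball x₀ r, ‖x - z‖ ^ (s - (d : ℝ)) ≤ C * r ^ s := by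
  have hne : Nonempty (Fin d) := ⟨⟨0, by omega⟩⟩
  have hV : 0 < (volume : Measure (EuclideanSpace ℝ (Fin d))).real (ball 0 1) :=
    ENNReal.toReal_pos (measure_ball_pos _ _ one_pos).ne' measure_ball_lt_top.ne
  set V := (volume : Measure (EuclideanSpace ℝ (Fin d))).real (ball 0 1) with hVdef
  have hd0 : (0 : ℝ) < d := by exact_mod_cast (by omega : 0 < d)
  refine ⟨d * (V * (2 ^ s / s)), by positivity, ?_⟩
  intro x₀ r hr x hx
  set f : ℝ → ℝ := (Iio (2 * r)).indicator (fun t => t ^ (s - (d : ℝ))) with hf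
  have hrad : EqOn (fun y : ℝ => y ^ (d - 1) • f y)
      ((Ioo 0 (2 * r)).indicator (fun y => y ^ (s - 1))) (Ioi 0) := by
    intro y (hy : 0 < y)
    by_cases h : y < 2 * r
    · simp only [hf, indicator, mem_Iio, mem_Ioo, h, hy, and_self, if_true, smul_eq_mul]
      rw [← Real.rpow_natCast, ← Real.rpow_add hy, Nat.cast_sub (by omega)]
      congr 1; push_cast; ring
    · simp [hf, indicator, h]
  have hio : IntegrableOn (fun y : ℝ => y ^ (s - 1)) (Ioo 0 (2 * r)) := by
    have := intervalIntegral.intervalIntegrable_rpow' (a := 0) (b := 2 * r)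
      (by linarith : -1 < s - 1)
    rw [intervalIntegrable_iff_integrableOn_Ioo_of_le (by linarith)] at this
    exact this
  have hint : Integrable (fun z : EuclideanSpace ℝ (Fin d) => f ‖z‖) := by
    rw [integrable_fun_norm_addHaar volume (f := f)]
    simp only [finrank_euclideanSpace, Fintype.card_fin]
    rw [integrableOn_congr_fun hrad measurableSet_Ioi]
    exact ((integrable_indicator_iff measurableSet_Ioo).2 hio).integrableOn
  have hval : ∫ z : EuclideanSpace ℝ (Fin d), f ‖z‖ = d * (V * ((2 * r) ^ s / s)) := by
    rw [integral_fun_norm_addHaar volume f]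
    simp only [finrank_euclideanSpace, Fintype.card_fin]
    rw [setIntegral_congr_fun measurableSet_Ioi hrad, setIntegral_indicator measurableSet_Ioo,
      inter_eq_self_of_subset_right (fun y hy => hy.1), ← integral_Ioc_eq_integral_Ioo,
      ← intervalIntegral.integral_of_le (by linarith), integral_rpow (Or.inl (by linarith))]
    simp [Real.zero_rpow hs.ne', hVdef]
  have hint' : Integrable (fun z => f ‖x - z‖) := hint.comp_sub_left x
  have heq : EqOn (fun z => ‖x - z‖ ^ (s - (d : ℝ))) (fun z => f ‖x - z‖) (ball x₀ r) := by
    intro z hz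
    have : ‖x - z‖ < 2 * r := by
      rw [← dist_eq_norm]
      have := dist_triangle_right x z x₀
      rw [mem_ball] at hx hz
      linarith
    simp [hf, indicator, this]
  refine ⟨(integrableOn_congr_fun heq measurableSet_ball).2 hint'.integrableOn, ?_⟩
  rw [setIntegral_congr_fun measurableSet_ball heq]
  calc ∫ z in ball x₀ r, f ‖x - z‖ ≤ ∫ z, f ‖x - z‖ := by
        apply setIntegral_le_integral hint'
        filter_upwards with z
        simp only [hf, indicator]; split_ifs <;> simp; positivity
    _ = d * (V * ((2 * r) ^ s / s)) := by
        rw [integral_sub_left_eq_self (fun z => f ‖z‖) volume x, hval]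
    _ = _ := by rw [Real.mul_rpow (by norm_num) hr.le]; ring

lemma deltaD_pos {d : ℕ} (hd : 2 ≤ d) (x₀ : EuclideanSpace ℝ (Fin d)) {r : ℝ} (hr : 0 < r)
    {x : EuclideanSpace ℝ (Fin d)} (hx : x ∈ ball x₀ r) : 0 < deltaD (ball x₀ r) x := by
  have hne : Nonempty (Fin d) := ⟨⟨0, by omega⟩⟩
  have hsp : (frontier (ball x₀ r)).Nonempty := by
    rw [frontier_ball x₀ hr.ne']
    exact NormedSpace.sphere_nonempty.2 hr.le
  unfold deltaD
  rw [← isClosed_frontier.notMem_iff_infDist_pos hsp, frontier_ball x₀ hr.ne']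
  rw [mem_ball] at hx
  rw [mem_sphere]
  exact hx.ne

lemma deltaD_lip {d : ℕ} (D : Set (EuclideanSpace ℝ (Fin d))) (x y : EuclideanSpace ℝ (Fin d)) :
    deltaD D x ≤ deltaD D y + ‖x - y‖ := by
  rw [← dist_eq_norm]
  exact infDist_le_infDist_add_dist

lemma main_of_good {d : ℕ} (hd : 2 ≤ d) {α β p κ γ K : ℝ} {Φ : ℝ → ℝ} (hγ : 0 < γ)
    (G : Good p κ γ (γ / 2) (d : ℝ) K Φ)
    (hk : ∀ (D : Set (EuclideanSpace ℝ (Fin d))) x y, hKer α β D x y =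
      ‖x - y‖ ^ (γ - (d : ℝ)) * min 1 (deltaD D y / ‖x - y‖) ^ p * Φ (‖x - y‖ / deltaD D x)) :
    ∃ c > 0, ∀ (x₀ : EuclideanSpace ℝ (Fin d)) (r : ℝ), 0 < r →
      ∀ x ∈ Metric.ball x₀ r, ∀ y ∈ Metric.ball x₀ r, x ≠ y →
        (∫ z in Metric.ball x₀ r,
            hKer α β (Metric.ball x₀ r) x z * hKer α β (Metric.ball x₀ r) z y)
          ≤ c * r ^ γ * hKer α β (Metric.ball x₀ r) x y := by
  have hne : Nonempty (Fin d) := ⟨⟨0, by omega⟩⟩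
  obtain ⟨C, hC, HC⟩ := ptwise G
  obtain ⟨M, hM, HM⟩ := radial d hd (half_pos hγ)
  refine ⟨C * 2 ^ (γ / 2) * (2 * M), by positivity, ?_⟩
  intro x₀ r hr x hx y hy hxy
  have hdist : ∀ z ∈ ball x₀ r, ∀ w ∈ ball x₀ r, ‖z - w‖ ≤ 2 * r := by
    intro z hz w hw
    rw [← dist_eq_norm]
    have := dist_triangle_right z w x₀
    rw [mem_ball] at hz hw
    linarith
  have hpos : ∀ z w : EuclideanSpace ℝ (Fin d), z ≠ w → 0 < ‖z - w‖ := fun z w h =>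
    norm_pos_iff.2 (sub_ne_zero.2 h)
  have hh : ∀ z ∈ ball x₀ r, ∀ w ∈ ball x₀ r, z ≠ w → 0 ≤ hKer α β (ball x₀ r) z w := by
    intro z hz w hw hzw
    rw [hk]
    have h1 := deltaD_pos hd x₀ hr hz
    have h2 := deltaD_pos hd x₀ hr hw
    have h3 := hpos z w hzw
    have h4 := G.one (‖z - w‖ / deltaD (ball x₀ r) z) (by positivity)
    have h5 : 0 < min 1 (deltaD (ball x₀ r) w / ‖z - w‖) := by positivity
    positivity
  set H := hKer α β (ball x₀ r) x y with hH
  have hH0 : 0 ≤ H := hh x hx y hy hxy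
  have hae : ∀ᵐ z ∂(volume.restrict (ball x₀ r)), z ∈ ball x₀ r ∧ x ≠ z ∧ z ≠ y := by
    have n1 : ∀ᵐ z ∂(volume.restrict (ball x₀ r)), z ≠ x := ae_restrict_of_ae (Measure.ae_ne _ x)
    have n2 : ∀ᵐ z ∂(volume.restrict (ball x₀ r)), z ≠ y := ae_restrict_of_ae (Measure.ae_ne _ y)
    filter_upwards [ae_restrict_mem measurableSet_ball, n1, n2] with z h1 h2 h3
    exact ⟨h1, h2.symm, h3⟩
  obtain ⟨I1, J1⟩ := HM x₀ r hr x hx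
  obtain ⟨I2, J2⟩ := HM x₀ r hr y hy
  have hsub : ∀ z : EuclideanSpace ℝ (Fin d), ‖z - y‖ = ‖y - z‖ := fun z => norm_sub_rev _ _
  set A := C * (2 * r) ^ (γ / 2) * H with hA
  have hA0 : 0 ≤ A := by positivity
  calc ∫ z in ball x₀ r, hKer α β (ball x₀ r) x z * hKer α β (ball x₀ r) z y
      ≤ ∫ z in ball x₀ r, A * (‖x - z‖ ^ (γ / 2 - (d : ℝ)) + ‖y - z‖ ^ (γ / 2 - (d : ℝ))) := by
        apply integral_mono_of_nonneg
        · filter_upwards [hae] with z hz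
          exact mul_nonneg (hh x hx z hz.1 hz.2.1) (hh z hz.1 y hy hz.2.2)
        · exact (I1.add I2).const_mul A
        · filter_upwards [hae] with z hz
          obtain ⟨hz, hxz, hzy⟩ := hz
          have key := HC ‖x - z‖ ‖z - y‖ ‖x - y‖ (deltaD (ball x₀ r) x) (deltaD (ball x₀ r) y)
            (deltaD (ball x₀ r) z) (2 * r) (hpos _ _ hxz) (hpos _ _ hzy) (hpos _ _ hxy)
            (deltaD_pos hd x₀ hr hx) (deltaD_pos hd x₀ hr hy) (deltaD_pos hd x₀ hr hz)
            (norm_sub_le_norm_sub_add_norm_sub _ _ _)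
            (by rw [norm_sub_rev z y]; exact norm_sub_le_norm_sub_add_norm_sub _ _ _)
            (by rw [add_comm, norm_sub_rev x z]; exact norm_sub_le_norm_sub_add_norm_sub _ _ _)
            (deltaD_lip _ _ _) (deltaD_lip _ _ _) (hdist _ hx _ hz) (hdist _ hz _ hy)
            (hdist _ hx _ hy)
          rw [← hk, ← hk, ← hk, ← hH, show γ - γ / 2 - (d : ℝ) = γ / 2 - d by ring, hsub z] at key
          refine key.trans (le_of_eq ?_)
          rw [hA]; ring
    _ = A * ((∫ z in ball x₀ r, ‖x - z‖ ^ (γ / 2 - (d : ℝ))) +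
          ∫ z in ball x₀ r, ‖y - z‖ ^ (γ / 2 - (d : ℝ))) := by
        rw [integral_const_mul, integral_add I1 I2]
    _ ≤ A * (M * r ^ (γ / 2) + M * r ^ (γ / 2)) := by gcongr
    _ = C * 2 ^ (γ / 2) * (2 * M) * (r ^ (γ / 2) * r ^ (γ / 2)) * H := by
        rw [hA, Real.mul_rpow (by norm_num) hr.le]; ring
    _ = _ := by rw [← Real.rpow_add hr, add_halves]

/-- `∫_B h_B(x,z) h_B(z,y) dz ≤ c r^{α-β} h_B(x,y)` on balls. -/
theorem integral_h_h_bound (d : ℕ) (hd : 2 ≤ d) (α β : ℝ)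
    (hβ : 0 < β) (hβα : β < α) (hα : α < 2) :
    ∃ c > 0, ∀ (x₀ : EuclideanSpace ℝ (Fin d)) (r : ℝ), 0 < r →
      ∀ x ∈ Metric.ball x₀ r, ∀ y ∈ Metric.ball x₀ r, x ≠ y →
        (∫ z in Metric.ball x₀ r,
            hKer α β (Metric.ball x₀ r) x z * hKer α β (Metric.ball x₀ r) z y)
          ≤ c * r ^ (α - β) * hKer α β (Metric.ball x₀ r) x y := by
  have hD : (2 : ℝ) ≤ d := by exact_mod_cast hd
  rcases lt_trichotomy (2 * β) α with h | h | h
  · refine main_of_good hd (by linarith) (goodA hβ hβα hα hD) ?_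
    intro D x y
    simp [hKer, h]
  · obtain rfl := h
    have e : 2 * β - β = β := by ring
    rw [e]
    refine main_of_good hd hβ (goodB hβ (by linarith) hD) ?_
    intro D x y
    simp [hKer]
  · refine main_of_good hd (by linarith) (goodC h hβα hα hD) ?_
    intro D x y
    simp [hKer, h.not_gt, h.ne]
end
end

section
/- Let d ≥ 1, β > 0 and γ ∈ (0, d). Then there exists a constant C = C(d, β, γ) > 0 such that for all distinct x, y ∈ ℝ^d: ∫_{{u ∈ ℝ^d : |u−x| ≥ (3/4)|x−y|}} |u−y|^{γ−d}·|u−x|^{−d−β} du ≤ C·|x−y|^{γ−d−β}. -/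
open MeasureTheory Metric Set

noncomputable section

lemma radial_aux (d : ℕ) (hd : 1 ≤ d) (S : Set ℝ) (hS : MeasurableSet S) (hS0 : S ⊆ Ioi 0)
    (p : ℝ) (hint : IntegrableOn (fun t : ℝ => t ^ ((d : ℝ) - 1 + p)) S) :
    Integrable (fun u : EuclideanSpace ℝ (Fin d) => S.indicator (fun t : ℝ => t ^ p) ‖u‖) ∧
    ∫ u : EuclideanSpace ℝ (Fin d), S.indicator (fun t : ℝ => t ^ p) ‖u‖ =
      ((d : ℝ) * volume.real (ball (0 : EuclideanSpace ℝ (Fin d)) 1)) *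
        ∫ t in S, t ^ ((d : ℝ) - 1 + p) := by
  have : Nonempty (Fin d) := ⟨⟨0, hd⟩⟩
  have key : (fun t : ℝ => t ^ (d - 1) • S.indicator (fun t : ℝ => t ^ p) t)
      = S.indicator (fun t : ℝ => t ^ ((d : ℝ) - 1 + p)) := by
    funext t
    by_cases ht : t ∈ S
    · have h0 : 0 < t := hS0 ht
      simp only [indicator_of_mem ht, smul_eq_mul]
      rw [Real.rpow_add h0, ← Real.rpow_natCast, Nat.cast_sub hd, Nat.cast_one]
    · simp [indicator_of_notMem ht]
  constructor
  · rw [integrable_fun_norm_addHaar volume (f := S.indicator (fun t : ℝ => t ^ p))]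
    simp only [finrank_euclideanSpace, Fintype.card_fin]
    rw [key]
    exact ((integrable_indicator_iff hS).2 hint).integrableOn
  · rw [integral_fun_norm_addHaar volume (S.indicator (fun t : ℝ => t ^ p))]
    simp only [finrank_euclideanSpace, Fintype.card_fin]
    rw [key, setIntegral_indicator hS, inter_eq_self_of_subset_right hS0]
    simp only [nsmul_eq_mul, smul_eq_mul]
    ring

/-- a Riesz-convolution-type integral bound. -/
theorem riesz_convolution_bound (d : ℕ) (hd : 1 ≤ d) (β γ : ℝ)
    (hβ : 0 < β) (hγ0 : 0 < γ) (hγd : γ < d) :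
    ∃ C > 0, ∀ x y : EuclideanSpace ℝ (Fin d), x ≠ y →
      (∫ u in {u : EuclideanSpace ℝ (Fin d) | 3 / 4 * ‖x - y‖ ≤ ‖u - x‖},
          ‖u - y‖ ^ (γ - (d : ℝ)) * ‖u - x‖ ^ (-(d : ℝ) - β))
        ≤ C * ‖x - y‖ ^ (γ - (d : ℝ) - β) := by
  set c : ℝ := (d : ℝ) * volume.real (ball (0 : EuclideanSpace ℝ (Fin d)) 1) with hc
  have hc0 : 0 < c := by
    have h1 : (0 : ℝ) < d := by exact_mod_cast hd
    have h2 : 0 < volume.real (ball (0 : EuclideanSpace ℝ (Fin d)) 1) :=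
      ENNReal.toReal_pos (measure_ball_pos _ _ one_pos).ne' measure_ball_lt_top.ne
    positivity
  refine ⟨(1 / 2 : ℝ) ^ (-(d : ℝ) - β) * (c * ((1 / 4 : ℝ) ^ γ / γ)) +
    (1 / 4 : ℝ) ^ (γ - (d : ℝ)) * (c * ((1 / 2 : ℝ) ^ (-β) / β)), by positivity, ?_⟩
  intro x y hxy
  set r := ‖x - y‖ with hr
  have hr0 : 0 < r := norm_pos_iff.2 (sub_ne_zero.2 hxy)
  obtain ⟨iF, eF⟩ := radial_aux d hd (Ioc 0 (r / 4)) measurableSet_Ioc (fun t ht => ht.1)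
    (γ - d) (by
      rw [← intervalIntegrable_iff_integrableOn_Ioc_of_le (by positivity)]
      exact intervalIntegral.intervalIntegrable_rpow' (by linarith))
  obtain ⟨iG, eG⟩ := radial_aux d hd (Ioi (r / 2)) measurableSet_Ioi
    (fun t ht => lt_trans (by positivity : 0 < r / 2) ht)
    (-d - β) (integrableOn_Ioi_rpow_of_lt (by linarith) (by positivity))
  rw [← intervalIntegral.integral_of_le (by positivity), integral_rpow (Or.inl (by linarith)),
    show (d : ℝ) - 1 + (γ - d) + 1 = γ by ring, Real.zero_rpow hγ0.ne', sub_zero] at eF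
  rw [integral_Ioi_rpow_of_lt (by linarith) (by positivity),
    show (d : ℝ) - 1 + (-d - β) + 1 = -β by ring, neg_div_neg_eq] at eG
  set F := (Ioc 0 (r / 4)).indicator (fun t : ℝ => t ^ (γ - d))
  set G := (Ioi (r / 2)).indicator (fun t : ℝ => t ^ (-d - β))
  have F0 : ∀ t, 0 ≤ F t := fun t => indicator_nonneg (fun t ht => Real.rpow_nonneg ht.1.le _) t
  have G0 : ∀ t, 0 ≤ G t := fun t => indicator_nonneg
    (fun t ht => Real.rpow_nonneg (lt_trans (by positivity : 0 < r / 2) ht).le _) t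
  have iFy := (iF.comp_sub_right y).const_mul ((r / 2) ^ (-(d : ℝ) - β))
  have iGx := (iG.comp_sub_right x).const_mul ((r / 4) ^ (γ - (d : ℝ)))
  have hg0 : ∀ u : EuclideanSpace ℝ (Fin d), 0 ≤ (r / 2) ^ (-(d : ℝ) - β) * F ‖u - y‖ +
      (r / 4) ^ (γ - (d : ℝ)) * G ‖u - x‖ := fun u => by
    have := F0 ‖u - y‖
    have := G0 ‖u - x‖
    positivity
  have hS : MeasurableSet {u : EuclideanSpace ℝ (Fin d) | 3 / 4 * r ≤ ‖u - x‖} :=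
    measurableSet_le measurable_const (by fun_prop)
  calc _ ≤ ∫ u in {u : EuclideanSpace ℝ (Fin d) | 3 / 4 * r ≤ ‖u - x‖},
        ((r / 2) ^ (-(d : ℝ) - β) * F ‖u - y‖ + (r / 4) ^ (γ - (d : ℝ)) * G ‖u - x‖) := by
        refine integral_mono_of_nonneg (ae_of_all _ fun u => by positivity)
          (iFy.add iGx).integrableOn ?_
        refine (ae_restrict_iff' hS).2 (ae_of_all _ fun u hu => ?_)
        have hu' : 3 / 4 * r ≤ ‖u - x‖ := hu
        have h2 : r / 2 < ‖u - x‖ := by linarith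
        rcases le_or_gt ‖u - y‖ (r / 4) with h | h
        · rcases (norm_nonneg (u - y)).eq_or_lt with h0 | h0
          · simp only [← h0]
            rw [Real.zero_rpow (by linarith), zero_mul]
            have := hg0 u
            rwa [← h0] at this
          · have e : F ‖u - y‖ = ‖u - y‖ ^ (γ - (d : ℝ)) := indicator_of_mem (mem_Ioc.2 ⟨h0, h⟩) _
            have := Real.rpow_le_rpow_of_nonpos (by positivity) h2.le
              (by linarith : -(d : ℝ) - β ≤ 0)
            have := G0 ‖u - x‖
            simp only [e]
            rw [mul_comm]
            refine le_add_of_le_of_nonneg ?_ (by positivity)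
            gcongr
        · have e : G ‖u - x‖ = ‖u - x‖ ^ (-(d : ℝ) - β) := indicator_of_mem h2 _
          have := Real.rpow_le_rpow_of_nonpos (by positivity) h.le
              (by linarith : γ - (d : ℝ) ≤ 0)
          have := F0 ‖u - y‖
          simp only [e]
          refine le_add_of_nonneg_of_le (by positivity) ?_
          gcongr
    _ ≤ ∫ u, ((r / 2) ^ (-(d : ℝ) - β) * F ‖u - y‖ + (r / 4) ^ (γ - (d : ℝ)) * G ‖u - x‖) :=
        setIntegral_le_integral (iFy.add iGx) (ae_of_all _ hg0)
    _ = (r / 2) ^ (-(d : ℝ) - β) * (c * ((r / 4) ^ γ / γ)) +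
        (r / 4) ^ (γ - (d : ℝ)) * (c * ((r / 2) ^ (-β) / β)) := by
        rw [integral_add iFy iGx, integral_const_mul, integral_const_mul,
          integral_sub_right_eq_self (fun u => F ‖u‖) y,
          integral_sub_right_eq_self (fun u => G ‖u‖) x, eF, eG]
    _ = _ := by
        have e : ∀ k p : ℝ, 0 < k → (r / k) ^ p = r ^ p * (1 / k) ^ p := fun k p hk => by
          rw [← Real.mul_rpow hr0.le (by positivity)]; congr 1; ring
        rw [e 2 _ two_pos, e 4 _ four_pos, e 2 _ two_pos, e 4 _ four_pos]
        have e1 : r ^ (γ - (d : ℝ) - β) = r ^ (-(d : ℝ) - β) * r ^ γ := by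
          rw [← Real.rpow_add hr0]; congr 1; ring
        have e2 : r ^ (γ - (d : ℝ) - β) = r ^ (γ - (d : ℝ)) * r ^ (-β) := by
          rw [← Real.rpow_add hr0]; congr 1
        rw [add_mul]
        nth_rewrite 1 [e1]
        rw [e2]
        ring
end
end

section
/- Let D ⊂ ℝ^d be a bounded open set and let p : (0,∞) × D × D → ℝ satisfy: (a) p is jointly continuous and strictly positive on (0,∞) × D × D; (b) for each t > 0, sup_{x,y ∈ D} p(t,x,y) < ∞; (c) ∫_D p(t,x,y) dy ≤ 1 for all t > 0 and x ∈ D; (d) the semigroup property p(t+s,x,y) = ∫_D p(t,x,z)·p(s,z,y) dz for all s,t > 0 and x,y ∈ D. Define P_t f(x) := ∫_D p(t,x,y) f(y) dy for f ∈ L²(D; dx). Then there exist λ₁ ∈ ℝ and a bounded, strictly positive, continuous function φ on D with ∫_D φ(x)² dx = 1 such that P_t φ = e^{−λ₁ t} φ for every t > 0; moreover, for each t > 0, e^{−λ₁ t} equals the spectral radius of the compact operator P_t on L²(D; dx). -/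
open MeasureTheory Metric Set
noncomputable section

/-- Hypotheses on a bounded sub-Markov kernel semigroup. -/
structure SubMarkovKer {X : Type*} [MeasurableSpace X] (μ : Measure X) (q : ℝ → X → X → ℝ) :
    Prop where
  meas : Measurable (fun z : ℝ × X × X => q z.1 z.2.1 z.2.2)
  nonneg : ∀ t x y, 0 ≤ q t x y
  bdd : ∀ t > 0, ∃ M, ∀ x y, q t x y ≤ M
  sub : ∀ t > 0, ∀ x, ∫ y, q t x y ∂μ ≤ 1
  semi : ∀ t > 0, ∀ s > 0, ∀ x y, q (t + s) x y = ∫ z, q t x z * q s z y ∂μ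

set_option linter.unusedSectionVars false

namespace SubMarkovKer

variable {X : Type*} [MeasurableSpace X] {μ : Measure X} [IsFiniteMeasure μ]
  {q : ℝ → X → X → ℝ}

theorem bdd_fun_integrable {f : X → ℝ} (hf : Measurable f) {M : ℝ} (h : ∀ x, |f x| ≤ M) :
    Integrable f μ :=
  Integrable.of_bound hf.aestronglyMeasurable M (Filter.Eventually.of_forall h)

theorem meas_y (hq : SubMarkovKer μ q) (t : ℝ) (x : X) : Measurable (fun y => q t x y) :=
  hq.meas.comp (by fun_prop : Measurable (fun y : X => (t, x, y)))

theorem abs_bdd (hq : SubMarkovKer μ q) {t : ℝ} (ht : 0 < t) :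
    ∃ M, 0 ≤ M ∧ ∀ x y, |q t x y| ≤ M := by
  obtain ⟨M, hM⟩ := hq.bdd t ht
  refine ⟨max M 0, le_max_right _ _, fun x y => ?_⟩
  rw [abs_of_nonneg (hq.nonneg t x y)]
  exact (hM x y).trans (le_max_left _ _)

theorem int_q (hq : SubMarkovKer μ q) {t : ℝ} (ht : 0 < t) (x : X) :
    Integrable (fun y => q t x y) μ := by
  obtain ⟨M, -, hM⟩ := hq.abs_bdd ht
  exact bdd_fun_integrable (hq.meas_y t x) (hM x)

theorem int_qf (hq : SubMarkovKer μ q) {t : ℝ} (ht : 0 < t) (x : X) {f : X → ℝ}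
    (hf : Integrable f μ) : Integrable (fun y => q t x y * f y) μ := by
  obtain ⟨M, -, hM⟩ := hq.abs_bdd ht
  exact hf.bdd_mul (c := M) (hq.meas_y t x).aestronglyMeasurable
    (Filter.Eventually.of_forall (hM x))

/-- total mass -/
def mass (μ : Measure X) (q : ℝ → X → X → ℝ) (t : ℝ) (x : X) : ℝ := ∫ y, q t x y ∂μ

theorem mass_nonneg (hq : SubMarkovKer μ q) (t : ℝ) (x : X) : 0 ≤ mass μ q t x :=
  integral_nonneg (hq.nonneg t x)

theorem mass_le_one (hq : SubMarkovKer μ q) {t : ℝ} (ht : 0 < t) (x : X) : mass μ q t x ≤ 1 :=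
  hq.sub t ht x

theorem mass_meas (hq : SubMarkovKer μ q) : Measurable (fun z : ℝ × X => mass μ q z.1 z.2) := by
  have h : StronglyMeasurable (fun z : (ℝ × X) × X => q z.1.1 z.1.2 z.2) :=
    (hq.meas.comp (by fun_prop : Measurable
      (fun z : (ℝ × X) × X => (z.1.1, z.1.2, z.2)))).stronglyMeasurable
  exact (h.integral_prod_right' (ν := μ)).measurable

theorem mass_meas_x (hq : SubMarkovKer μ q) (t : ℝ) : Measurable (fun x => mass μ q t x) :=
  hq.mass_meas.comp (by fun_prop : Measurable (fun x : X => (t, x)))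

theorem mass_meas_t (hq : SubMarkovKer μ q) (x : X) : Measurable (fun t => mass μ q t x) :=
  hq.mass_meas.comp (by fun_prop : Measurable (fun t : ℝ => (t, x)))

theorem mass_int (hq : SubMarkovKer μ q) {t : ℝ} (ht : 0 < t) :
    Integrable (fun x => mass μ q t x) μ :=
  bdd_fun_integrable (hq.mass_meas_x t) (M := 1) fun x => by
    rw [abs_of_nonneg (hq.mass_nonneg t x)]; exact hq.mass_le_one ht x

theorem mass_add (hq : SubMarkovKer μ q) {t s : ℝ} (ht : 0 < t) (hs : 0 < s) (x : X) :
    mass μ q (t + s) x = ∫ z, q t x z * mass μ q s z ∂μ := by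
  obtain ⟨M, hM0, hM⟩ := hq.abs_bdd ht
  obtain ⟨N, hN0, hN⟩ := hq.abs_bdd hs
  have hi : Integrable (Function.uncurry fun y z => q t x z * q s z y) (μ.prod μ) := by
    refine bdd_fun_integrable (M := M * N) ?_ ?_
    · have h1 : Measurable (fun w : X × X => q t x w.2) := (hq.meas_y t x).comp measurable_snd
      have h2 : Measurable (fun w : X × X => q s w.2 w.1) :=
        hq.meas.comp (by fun_prop : Measurable (fun w : X × X => (s, w.2, w.1)))
      exact h1.mul h2
    · rintro ⟨y, z⟩
      simp only [Function.uncurry_apply_pair, abs_mul]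
      exact mul_le_mul (hM x z) (hN z y) (abs_nonneg _) hM0
  unfold mass
  simp_rw [hq.semi t ht s hs x]
  rw [integral_integral_swap hi]
  simp_rw [integral_const_mul]

theorem mono_qf (hq : SubMarkovKer μ q) {t : ℝ} (ht : 0 < t) (x : X) {f g : X → ℝ}
    (hf : Integrable f μ) (hg : Integrable g μ) (h : ∀ z, f z ≤ g z) :
    ∫ z, q t x z * f z ∂μ ≤ ∫ z, q t x z * g z ∂μ :=
  integral_mono (hq.int_qf ht x hf) (hq.int_qf ht x hg)
    fun z => mul_le_mul_of_nonneg_left (h z) (hq.nonneg t x z)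

theorem mass_anti (hq : SubMarkovKer μ q) {t s : ℝ} (ht : 0 < t) (hs : t ≤ s) (x : X) :
    mass μ q s x ≤ mass μ q t x := by
  rcases hs.eq_or_lt with rfl | hs
  · rfl
  have h := hq.mass_add ht (sub_pos.2 hs) x
  rw [add_sub_cancel] at h
  rw [h]
  refine (hq.mono_qf ht x (hq.mass_int (sub_pos.2 hs)) (integrable_const 1)
    (fun z => hq.mass_le_one (sub_pos.2 hs) z)).trans ?_
  simp [mass]

/-- growth exponents -/
def expSet (μ : Measure X) (q : ℝ → X → X → ℝ) : Set ℝ :=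
  {l | ∃ C, ∀ t > 0, ∀ x, mass μ q t x ≤ C * Real.exp (l * t)}

theorem zero_mem (hq : SubMarkovKer μ q) : (0 : ℝ) ∈ expSet μ q :=
  ⟨1, fun t ht x => by simpa using hq.mass_le_one ht x⟩

theorem mass_pow_lower (hq : SubMarkovKer μ q) {B : Set X} (hB : MeasurableSet B) {c : ℝ}
    (hc : 0 < c) (h : ∀ x ∈ B, ∀ y ∈ B, c ≤ q 1 x y) (n : ℕ) :
    ∀ x ∈ B, (c * μ.real B) ^ (n + 1) ≤ mass μ q (n + 1) x := by
  have key : ∀ x ∈ B, ∀ f : X → ℝ, Integrable f μ → (∀ z, 0 ≤ f z) → ∀ a : ℝ, 0 ≤ a →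
      (∀ z ∈ B, a ≤ f z) → (c * μ.real B) * a ≤ ∫ z, q 1 x z * f z ∂μ := by
    intro x hx f hf hf0 a ha hfa
    have h1 : ∫ z, B.indicator (fun _ => c * a) z ∂μ ≤ ∫ z, q 1 x z * f z ∂μ := by
      refine integral_mono ((integrable_const _).indicator hB) (hq.int_qf one_pos x hf) fun z => ?_
      by_cases hz : z ∈ B
      · simp only [indicator_of_mem hz]
        exact mul_le_mul (h x hx z hz) (hfa z hz) ha (hq.nonneg 1 x z)
      · simp only [indicator_of_notMem hz]
        exact mul_nonneg (hq.nonneg 1 x z) (hf0 z)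
    rw [integral_indicator_const _ hB, smul_eq_mul] at h1
    linarith
  induction n with
  | zero =>
    intro x hx
    have := key x hx (fun _ => 1) (integrable_const 1) (fun _ => zero_le_one) 1 zero_le_one
      (fun _ _ => le_rfl)
    simpa [mass] using this
  | succ n ih =>
    intro x hx
    have hp : (0 : ℝ) < (n : ℝ) + 1 := by positivity
    have := key x hx (fun z => mass μ q (n + 1) z) (hq.mass_int hp) (hq.mass_nonneg _)
      ((c * μ.real B) ^ (n + 1)) (by positivity) ih
    rw [← hq.mass_add one_pos hp] at this
    rw [pow_succ' _ (n + 1)]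
    push_cast
    rwa [add_comm ((n : ℝ) + 1) 1]

theorem le_of_geom {a b C : ℝ} (hb : 0 < b) (h : ∀ n : ℕ, a ^ n ≤ C * b ^ n) : a ≤ b := by
  by_contra hab
  push Not at hab
  have h1 : 1 < a / b := (one_lt_div hb).2 hab
  obtain ⟨n, hn⟩ := pow_unbounded_of_one_lt C h1
  rw [div_pow, lt_div_iff₀ (by positivity)] at hn
  exact absurd (h n) (not_le.2 hn)

theorem expSet_bddBelow (hq : SubMarkovKer μ q) {B : Set X} (hB : MeasurableSet B) {c : ℝ}
    (hc : 0 < c) (h : ∀ x ∈ B, ∀ y ∈ B, c ≤ q 1 x y) (hμB : 0 < μ.real B) :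
    BddBelow (expSet μ q) := by
  have hne : B.Nonempty := by
    by_contra hB'
    rw [not_nonempty_iff_eq_empty] at hB'
    simp [hB'] at hμB
  obtain ⟨x, hx⟩ := hne
  refine ⟨Real.log (c * μ.real B), ?_⟩
  rintro l ⟨C, hC⟩
  rw [Real.log_le_iff_le_exp (by positivity)]
  have hb : 0 < c * μ.real B := by positivity
  refine le_of_geom (C := C * Real.exp l / (c * μ.real B)) (Real.exp_pos _) fun n => ?_
  have h1 := hq.mass_pow_lower hB hc h n x hx
  have h2 := hC (n + 1) (by positivity) x
  have h3 : Real.exp (l * (n + 1)) = Real.exp l ^ n * Real.exp l := by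
    rw [← Real.exp_nat_mul, ← Real.exp_add]; ring_nf
  rw [h3] at h2
  have h4 := h1.trans h2
  rw [div_mul_eq_mul_div, le_div_iff₀ hb, ← pow_succ]
  linarith

/-- growth bound -/
def omega (μ : Measure X) (q : ℝ → X → X → ℝ) : ℝ := sInf (expSet μ q)

theorem growth (hq : SubMarkovKer μ q) {l : ℝ} (hl : omega μ q < l) :
    ∃ C, 0 ≤ C ∧ ∀ t > 0, ∀ x, mass μ q t x ≤ C * Real.exp (l * t) := by
  obtain ⟨l', ⟨C, hC⟩, hl'⟩ := exists_lt_of_csInf_lt ⟨0, hq.zero_mem⟩ hl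
  refine ⟨max C 0, le_max_right _ _, fun t ht x => (hC t ht x).trans ?_⟩
  refine mul_le_mul (le_max_left _ _) ?_ (Real.exp_pos _).le (le_max_right _ _)
  exact Real.exp_le_exp.2 (by nlinarith)

/-- resolvent applied to `1` -/
def res (μ : Measure X) (q : ℝ → X → X → ℝ) (l : ℝ) (x : X) : ℝ :=
  ∫ t in Ioi (0 : ℝ), Real.exp (-l * t) * mass μ q t x

theorem res_dom (hq : SubMarkovKer μ q) {l : ℝ} (hl : omega μ q < l) :
    ∃ F : ℝ → ℝ, IntegrableOn F (Ioi 0) ∧ (∀ t, 0 ≤ F t) ∧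
      ∀ t > 0, ∀ x, Real.exp (-l * t) * mass μ q t x ≤ F t := by
  obtain ⟨l', h1, h2⟩ := exists_between hl
  obtain ⟨C, hC0, hC⟩ := hq.growth h1
  refine ⟨fun t => C * Real.exp ((l' - l) * t), ?_, fun t => by positivity, fun t ht x => ?_⟩
  · exact ((integrableOn_exp_mul_Ioi (by linarith) 0)).const_mul C
  · refine (mul_le_mul_of_nonneg_left (hC t ht x) (Real.exp_pos _).le).trans (le_of_eq ?_)
    beta_reduce
    rw [show (l' - l) * t = -l * t + l' * t by ring, Real.exp_add]; ring

theorem res_integrableOn (hq : SubMarkovKer μ q) {l : ℝ} (hl : omega μ q < l) (x : X) :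
    IntegrableOn (fun t => Real.exp (-l * t) * mass μ q t x) (Ioi 0) := by
  obtain ⟨F, hF, hF0, hFb⟩ := hq.res_dom hl
  refine Integrable.mono' hF ?_ ?_
  · have := hq.mass_meas_t x
    exact (by fun_prop : Measurable
      (fun t => Real.exp (-l * t) * mass μ q t x)).aestronglyMeasurable
  · refine (ae_restrict_iff' measurableSet_Ioi).2 (Filter.Eventually.of_forall fun t ht => ?_)
    rw [Real.norm_of_nonneg (mul_nonneg (Real.exp_pos _).le (hq.mass_nonneg t x))]
    exact hFb t ht x

theorem res_nonneg (hq : SubMarkovKer μ q) (l : ℝ) (x : X) : 0 ≤ res μ q l x :=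
  integral_nonneg fun t => mul_nonneg (Real.exp_pos _).le (hq.mass_nonneg t x)

theorem res_bdd (hq : SubMarkovKer μ q) {l : ℝ} (hl : omega μ q < l) :
    ∃ K, ∀ x, res μ q l x ≤ K := by
  obtain ⟨F, hF, hF0, hFb⟩ := hq.res_dom hl
  exact ⟨∫ t in Ioi (0 : ℝ), F t, fun x => setIntegral_mono_on (hq.res_integrableOn hl x) hF
    measurableSet_Ioi fun t ht => hFb t ht x⟩

theorem res_meas (hq : SubMarkovKer μ q) (l : ℝ) : Measurable (res μ q l) := by
  have h : StronglyMeasurable (fun z : X × ℝ => Real.exp (-l * z.2) * mass μ q z.2 z.1) := by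
    have : Measurable (fun z : X × ℝ => mass μ q z.2 z.1) := hq.mass_meas.comp measurable_swap
    exact (by fun_prop : Measurable
      (fun z : X × ℝ => Real.exp (-l * z.2) * mass μ q z.2 z.1)).stronglyMeasurable
  exact (h.integral_prod_right' (ν := volume.restrict (Ioi (0 : ℝ)))).measurable

theorem res_int (hq : SubMarkovKer μ q) {l : ℝ} (hl : omega μ q < l) :
    Integrable (res μ q l) μ := by
  obtain ⟨K, hK⟩ := hq.res_bdd hl
  exact bdd_fun_integrable (hq.res_meas l) fun x => by
    rw [abs_of_nonneg (hq.res_nonneg l x)]; exact hK x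

theorem res_eq (hq : SubMarkovKer μ q) {l : ℝ} (hl : omega μ q < l) {s : ℝ} (hs : 0 < s) (x : X) :
    ∫ y, q s x y * res μ q l y ∂μ = Real.exp (l * s) *
      (res μ q l x - ∫ t in Ioc 0 s, Real.exp (-l * t) * mass μ q t x) := by
  obtain ⟨F, hF, hF0, hFb⟩ := hq.res_dom hl
  obtain ⟨M, hM0, hM⟩ := hq.abs_bdd hs
  have hi : Integrable (Function.uncurry fun y t => q s x y * (Real.exp (-l * t) * mass μ q t y))
      (μ.prod (volume.restrict (Ioi (0 : ℝ)))) := by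
    have hdom : Integrable (fun w : X × ℝ => M * F w.2) (μ.prod (volume.restrict (Ioi (0 : ℝ)))) :=
      (Integrable.comp_snd hF μ).const_mul M
    refine Integrable.mono' hdom ?_ ?_
    · have h1 : Measurable (fun w : X × ℝ => q s x w.1) := (hq.meas_y s x).comp measurable_fst
      have h2 : Measurable (fun w : X × ℝ => mass μ q w.2 w.1) := hq.mass_meas.comp measurable_swap
      exact (h1.mul ((by fun_prop : Measurable fun w : X × ℝ => Real.exp (-l * w.2)).mul
        h2)).aestronglyMeasurable
    · have : ∀ᵐ w ∂(μ.prod (volume.restrict (Ioi (0 : ℝ)))), w.2 ∈ Ioi (0 : ℝ) :=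
        Measure.quasiMeasurePreserving_snd.ae (ae_restrict_mem measurableSet_Ioi)
      filter_upwards [this] with w hw
      have hn := mul_nonneg (Real.exp_pos (-l * w.2)).le (hq.mass_nonneg w.2 w.1)
      simp only [Function.uncurry]
      rw [norm_mul, Real.norm_of_nonneg hn]
      exact mul_le_mul (hM _ _) (hFb _ hw _) hn hM0
  have e1 : ∫ y, q s x y * res μ q l y ∂μ
      = ∫ t in Ioi (0 : ℝ), Real.exp (-l * t) * mass μ q (t + s) x := by
    unfold res
    simp_rw [← integral_const_mul]
    rw [integral_integral_swap hi]
    refine setIntegral_congr_fun measurableSet_Ioi fun t ht => ?_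
    rw [add_comm t s, hq.mass_add hs ht, ← integral_const_mul]
    congr 1; ext y; ring
  have e2 : ∫ t in Ioi (0 : ℝ), Real.exp (-l * t) * mass μ q (t + s) x
      = Real.exp (l * s) * ∫ t in Ioi s, Real.exp (-l * t) * mass μ q t x := by
    have := (measurePreserving_add_right (volume : Measure ℝ) s).setIntegral_preimage_emb
      (measurableEmbedding_addRight s) (fun t => Real.exp (-l * t) * mass μ q t x) (Ioi s)
    rw [preimage_add_const_Ioi, sub_self] at this
    rw [← this, ← integral_const_mul]
    congr 1; ext t
    rw [← mul_assoc, ← Real.exp_add]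
    ring_nf
  have e3 : res μ q l x = (∫ t in Ioc 0 s, Real.exp (-l * t) * mass μ q t x) +
      ∫ t in Ioi s, Real.exp (-l * t) * mass μ q t x := by
    unfold res
    rw [← Ioc_union_Ioi_eq_Ioi hs.le]
    exact setIntegral_union (Ioc_disjoint_Ioi le_rfl) measurableSet_Ioi
      ((hq.res_integrableOn hl x).mono_set Ioc_subset_Ioi_self)
      ((hq.res_integrableOn hl x).mono_set (Ioi_subset_Ioi hs.le))
  rw [e1, e2, e3]; ring

theorem res_unbdd (hq : SubMarkovKer μ q) (hbelow : BddBelow (expSet μ q)) {K ε : ℝ} (hK : 0 < K)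
    (hε : 0 < ε) (hε1 : ε ≤ 1) :
    ∃ l, omega μ q < l ∧ l < omega μ q + ε ∧ ∃ x, K < res μ q l x := by
  by_contra hcon
  push Not at hcon
  set ω := omega μ q with hω
  set c0 := Real.exp (-(|ω| + 1)) with hc0
  have hc0p : 0 < c0 := Real.exp_pos _
  set θ := 1 + c0 * c0 / K with hθ
  have hθ1 : 1 < θ := by have : 0 < c0 * c0 / K := by positivity
                         linarith
  have hlog : 0 < Real.log θ := Real.log_pos hθ1
  set δ := min ε (Real.log θ) / 2 with hδ
  have hm : 0 < min ε (Real.log θ) := lt_min hε hlog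
  have hδ0 : 0 < δ := by positivity
  have hδ1 : δ < ε := by have := min_le_left ε (Real.log θ); linarith
  have hδ2 : δ < Real.log θ := by have := min_le_right ε (Real.log θ); linarith
  obtain ⟨l, hl⟩ : ∃ l, l = ω + δ := ⟨_, rfl⟩
  have hl1 : ω < l := by linarith
  have hl2 : l < ω + ε := by linarith
  have hu := hcon l hl1 hl2
  have habs : |l| ≤ |ω| + 1 := by
    rw [hl]; refine (abs_add_le _ _).trans ?_
    rw [abs_of_pos hδ0]; linarith
  have hcl : c0 ≤ Real.exp l := Real.exp_le_exp.2 (by linarith [neg_abs_le l])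
  have hw : ∀ x, c0 * mass μ q 1 x ≤ ∫ t in Ioc (0 : ℝ) 1, Real.exp (-l * t) * mass μ q t x := by
    intro x
    have h1 : ∫ t in Ioc (0 : ℝ) 1, c0 * mass μ q 1 x ≤
        ∫ t in Ioc (0 : ℝ) 1, Real.exp (-l * t) * mass μ q t x := by
      refine setIntegral_mono_on (integrableOn_const (by simp)) ((hq.res_integrableOn hl1 x).mono_set
        Ioc_subset_Ioi_self) measurableSet_Ioc fun t ht => ?_
      refine mul_le_mul (Real.exp_le_exp.2 ?_) (hq.mass_anti ht.1 ht.2 x) (hq.mass_nonneg _ _)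
        (Real.exp_pos _).le
      have : l * t ≤ |l| := by
        calc l * t ≤ |l| * t := mul_le_mul_of_nonneg_right (le_abs_self l) ht.1.le
          _ ≤ |l| * 1 := mul_le_mul_of_nonneg_left ht.2 (abs_nonneg l)
          _ = |l| := mul_one _
      linarith
    simpa using h1
  have hQ0 : ∀ x, 0 ≤ ∫ y, q 1 x y * res μ q l y ∂μ := fun x =>
    integral_nonneg fun y => mul_nonneg (hq.nonneg _ _ _) (hq.res_nonneg _ _)
  have hQK : ∀ x, ∫ y, q 1 x y * res μ q l y ∂μ ≤ K * mass μ q 1 x := by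
    intro x
    refine (hq.mono_qf one_pos x (hq.res_int hl1) (integrable_const K) hu).trans (le_of_eq ?_)
    rw [integral_mul_const, mul_comm, mass]
  have hQ : ∀ x, ∫ y, q 1 x y * res μ q l y ∂μ ≤ Real.exp l / θ * res μ q l x := by
    intro x
    have e := hq.res_eq hl1 one_pos x
    rw [mul_one] at e
    have h0 := hQ0 x
    have h1 := hQK x
    have h2 := hw x
    set Q := ∫ y, q 1 x y * res μ q l y ∂μ
    set w := ∫ t in Ioc (0 : ℝ) 1, Real.exp (-l * t) * mass μ q t x
    rw [div_mul_eq_mul_div, le_div_iff₀ (by linarith)]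
    have h3 : c0 / K * Q ≤ w := by
      refine le_trans ?_ h2
      rw [div_mul_eq_mul_div, div_le_iff₀ hK]
      nlinarith
    have h4 : c0 * (c0 / K * Q) ≤ Real.exp l * w :=
      mul_le_mul hcl h3 (by positivity) (Real.exp_pos _).le
    have h5 : Q * θ = Q + c0 * (c0 / K * Q) := by rw [hθ]; ring
    rw [h5]
    linarith
  have hu1 : ∀ x, c0 * mass μ q 1 x ≤ res μ q l x := by
    intro x
    have e := hq.res_eq hl1 one_pos x
    have h0 := hQ0 x
    rw [e] at h0
    have := nonneg_of_mul_nonneg_right h0 (Real.exp_pos _)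
    linarith [hw x]
  obtain ⟨a, ha⟩ : ∃ a, a = l - Real.log θ := ⟨_, rfl⟩
  have hκ : Real.exp l / θ = Real.exp a := by
    rw [ha, Real.exp_sub, Real.exp_log (by linarith)]
  have hind : ∀ n : ℕ, ∀ x, c0 * mass μ q (n + 1) x ≤ Real.exp a ^ n * res μ q l x := by
    intro n
    induction n with
    | zero => intro x; simpa using hu1 x
    | succ n ih =>
      intro x
      have hp : (0 : ℝ) < (n : ℝ) + 1 := by positivity
      have h1 := hq.mono_qf one_pos x ((hq.mass_int hp).const_mul c0)
        ((hq.res_int hl1).const_mul (Real.exp a ^ n)) ih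
      have h2 : ∫ z, q 1 x z * (c0 * mass μ q (n + 1) z) ∂μ = c0 * mass μ q (1 + (n + 1)) x := by
        rw [hq.mass_add one_pos hp, ← integral_const_mul]
        congr 1; ext z; ring
      have h3 : ∫ z, q 1 x z * (Real.exp a ^ n * res μ q l z) ∂μ
          = Real.exp a ^ n * ∫ z, q 1 x z * res μ q l z ∂μ := by
        rw [← integral_const_mul]
        congr 1; ext z; ring
      rw [h2, h3] at h1
      have h4 := mul_le_mul_of_nonneg_left (hQ x) (pow_nonneg (Real.exp_pos a).le n)
      rw [hκ] at h4
      push_cast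
      rw [add_comm ((n : ℝ) + 1) 1, pow_succ, mul_assoc]
      exact h1.trans h4
  have hmem : a ∈ expSet μ q := by
    refine ⟨Real.exp (2 * |a|) * (1 + K / c0), fun t ht x => ?_⟩
    have hKc : 0 < K / c0 := by positivity
    rcases lt_or_ge t 1 with h1 | h1
    · refine (hq.mass_le_one ht x).trans ?_
      have : 1 ≤ Real.exp (2 * |a|) * Real.exp (a * t) := by
        rw [← Real.exp_add]
        refine Real.one_le_exp ?_
        have : -(|a| * t) ≤ a * t := by nlinarith [neg_abs_le a]
        nlinarith [abs_nonneg a]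
      nlinarith
    · have hf : 1 ≤ ⌊t⌋₊ := Nat.one_le_floor_iff _ |>.2 h1
      obtain ⟨n, hn⟩ : ∃ n, ⌊t⌋₊ = n + 1 := ⟨⌊t⌋₊ - 1, by omega⟩
      have hn1 : (n : ℝ) + 1 ≤ t := by
        have := Nat.floor_le ht.le; rw [hn] at this; exact_mod_cast this
      have hn2 : t < (n : ℝ) + 2 := by
        have := Nat.lt_floor_add_one t; rw [hn] at this; push_cast at this; linarith
      have h2 := hq.mass_anti (by positivity) hn1 x
      have h3 := hind n x
      have h4 : Real.exp a ^ n ≤ Real.exp (2 * |a|) * Real.exp (a * t) := by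
        rw [← Real.exp_nat_mul, ← Real.exp_add]
        refine Real.exp_le_exp.2 ?_
        have : a * (n - t) ≤ |a| * 2 := by
          refine (le_abs_self _).trans ?_
          rw [abs_mul]
          refine mul_le_mul_of_nonneg_left ?_ (abs_nonneg a)
          rw [abs_le]; constructor <;> linarith
        linarith
      have h5 : c0 * mass μ q t x ≤ Real.exp (2 * |a|) * Real.exp (a * t) * K :=
        ((mul_le_mul_of_nonneg_left h2 hc0p.le).trans h3).trans
          (mul_le_mul h4 (hu x) (hq.res_nonneg _ _) (by positivity))
      have h6 : mass μ q t x ≤ Real.exp (2 * |a|) * Real.exp (a * t) * K / c0 := by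
        rw [le_div_iff₀ hc0p]; linarith
      refine h6.trans ?_
      have : 0 < Real.exp (2 * |a|) * Real.exp (a * t) := by positivity
      have e : Real.exp (2 * |a|) * (1 + K / c0) * Real.exp (a * t)
        = Real.exp (2 * |a|) * Real.exp (a * t) + 
          Real.exp (2 * |a|) * Real.exp (a * t) * K / c0 := by ring
      linarith
  have := csInf_le hbelow hmem
  have h7 : ω ≤ a := this
  linarith

/-- Weak sequential compactness. -/
theorem weak_compact [MeasurableSpace.CountablyGenerated X] (hq : SubMarkovKer μ q)
    (v : ℕ → X → ℝ) (hv : ∀ n, Measurable (v n))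
    (hb : ∀ n x, |v n x| ≤ 1) :
    ∃ (g : X → ℝ) (k : ℕ → ℕ), StrictMono k ∧
      ∀ x, Filter.Tendsto (fun n => ∫ y, q 1 x y * v (k n) y ∂μ) Filter.atTop (nhds (g x)) := by
  have hvL : ∀ n, MemLp (v n) 2 μ := fun n =>
    MemLp.of_bound (hv n).aestronglyMeasurable 1 (Filter.Eventually.of_forall (hb n))
  obtain ⟨M, -, hM⟩ := hq.abs_bdd one_pos
  have hqL : ∀ x, MemLp (q 1 x) 2 μ := fun x =>
    MemLp.of_bound (hq.meas_y 1 x).aestronglyMeasurable M (Filter.Eventually.of_forall (hM x))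
  let R := (measureUnivNNReal μ : ℝ) ^ (2 : ENNReal).toReal⁻¹ * 1
  have hnorm : ∀ n, ‖(hvL n).toLp (v n)‖ ≤ R := fun n => by
    refine Lp.norm_le_of_ae_bound zero_le_one ?_
    filter_upwards [(hvL n).coeFn_toLp] with x hx
    rw [hx]; exact hb n x
  have : Fact ((2 : ENNReal) ≠ ⊤) := ⟨by simp⟩
  have hcpt := WeakDual.isSeqCompact_closedBall ℝ (Lp ℝ 2 μ) 0 R
  obtain ⟨w, -, k, hk, hlim⟩ := hcpt (x := fun n => StrongDual.toWeakDual
    (InnerProductSpace.toDual ℝ (Lp ℝ 2 μ) ((hvL n).toLp (v n)))) (fun n => by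
      simp only [mem_preimage, mem_closedBall, dist_zero_right]
      refine le_trans (le_of_eq ?_) (hnorm n)
      exact (InnerProductSpace.toDual ℝ (Lp ℝ 2 μ)).norm_map _)
  refine ⟨fun x => w ((hqL x).toLp (q 1 x)), k, hk, fun x => ?_⟩
  have h1 := ((WeakDual.eval_continuous ((hqL x).toLp (q 1 x))).tendsto w).comp hlim
  refine h1.congr fun n => ?_
  simp only [Function.comp]
  change inner ℝ ((hvL (k n)).toLp (v (k n))) ((hqL x).toLp (q 1 x)) = _
  rw [L2.inner_def]
  refine integral_congr_ae ?_
  filter_upwards [(hvL (k n)).coeFn_toLp, (hqL x).coeFn_toLp] with y h2 h3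
  rw [h2, h3]
  simp

theorem exists_eigen [MeasurableSpace.CountablyGenerated X] (hq : SubMarkovKer μ q)
    (hbelow : BddBelow (expSet μ q)) :
    ∃ v : X → ℝ, Measurable v ∧ (∀ x, 0 ≤ v x) ∧ (∀ x, v x ≤ 1) ∧ 0 < ∫ x, v x ∂μ ∧
      ∀ t > 0, ∀ x, ∫ y, q t x y * v y ∂μ = Real.exp (omega μ q * t) * v x := by
  set ω := omega μ q with hω
  have hex : ∀ n : ℕ, ∃ l, ω < l ∧ l < ω + 1 / ((n : ℝ) + 1) ∧ ∃ x, (n : ℝ) + 1 < res μ q l x :=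
    fun n => hq.res_unbdd hbelow (by positivity) (by positivity) (by
      rw [div_le_one (by positivity)]; linarith [(Nat.cast_nonneg n : (0 : ℝ) ≤ n)])
  choose l hl1 hl2 x0 hx0 using hex
  -- normalisation
  let S : ℕ → ℝ := fun n => ⨆ x, res μ q (l n) x
  have hbdd : ∀ n, BddAbove (range (res μ q (l n))) := fun n => by
    obtain ⟨K, hK⟩ := hq.res_bdd (hl1 n)
    exact ⟨K, by rintro _ ⟨x, rfl⟩; exact hK x⟩
  have hS : ∀ n x, res μ q (l n) x ≤ S n := fun n x => le_ciSup (hbdd n) x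
  have hSn : ∀ n : ℕ, (n : ℝ) + 1 < S n := fun n => (hx0 n).trans_le (hS n _)
  have hSp : ∀ n, 0 < S n := fun n => lt_trans (by positivity) (hSn n)
  have hx1 : ∀ n, ∃ x, S n / 2 < res μ q (l n) x := fun n => by
    have : Nonempty X := ⟨x0 n⟩
    exact exists_lt_of_lt_ciSup (by have := hSp n; change S n / 2 < S n; linarith)
  choose x1 hx1 using hx1
  let v : ℕ → X → ℝ := fun n x => res μ q (l n) x / S n
  have hv0 : ∀ n x, 0 ≤ v n x := fun n x => div_nonneg (hq.res_nonneg _ _) (hSp n).le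
  have hv1 : ∀ n x, v n x ≤ 1 := fun n x => (div_le_one (hSp n)).2 (hS n x)
  have hvm : ∀ n, Measurable (v n) := fun n => (hq.res_meas (l n)).div_const _
  have hvx : ∀ n, 1 / 2 < v n (x1 n) := fun n => by
    have := hx1 n
    change 1 / 2 < _ / _
    rw [lt_div_iff₀ (hSp n)]; linarith
  have hvi : ∀ n, Integrable (v n) μ := fun n => (hq.res_int (hl1 n)).div_const _
  let W : ℕ → ℝ → X → ℝ := fun n s x => (∫ t in Ioc 0 s, Real.exp (-l n * t) * mass μ q t x) / S n
  have heq : ∀ n, ∀ s > 0, ∀ x, ∫ y, q s x y * v n y ∂μ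
      = Real.exp (l n * s) * (v n x - W n s x) := by
    intro n s hs x
    have := hq.res_eq (hl1 n) hs x
    calc ∫ y, q s x y * v n y ∂μ = (∫ y, q s x y * res μ q (l n) y ∂μ) / S n := by
          rw [← integral_div]; congr 1; ext y; simp only [v]; ring
      _ = _ := by rw [this]; simp only [v, W]; ring
  have hone : Filter.Tendsto (fun n : ℕ => 1 / ((n : ℝ) + 1)) Filter.atTop (nhds 0) :=
    tendsto_one_div_add_atTop_nhds_zero_nat
  have hlabs : ∀ n, |l n| ≤ |ω| + 1 := fun n => by
    have h1 := hl1 n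
    have h2 := hl2 n
    have h3 : 1 / ((n : ℝ) + 1) ≤ 1 := by
      rw [div_le_one (by positivity)]; linarith [(Nat.cast_nonneg n : (0 : ℝ) ≤ n)]
    rw [abs_le]
    constructor
    · linarith [neg_abs_le ω]
    · linarith [le_abs_self ω]
  have hllim : Filter.Tendsto l Filter.atTop (nhds ω) := by
    refine tendsto_of_tendsto_of_tendsto_of_le_of_le tendsto_const_nhds ?_
      (fun n => (hl1 n).le) (fun n => (hl2 n).le)
    simpa using hone.const_add ω
  have hW0 : ∀ n s x, 0 ≤ W n s x := fun n s x => div_nonneg (integral_nonneg fun t =>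
    mul_nonneg (Real.exp_pos _).le (hq.mass_nonneg _ _)) (hSp n).le
  have hWle : ∀ n, ∀ s > 0, ∀ x, W n s x ≤ (s * Real.exp ((|ω| + 1) * s)) * (1 / ((n : ℝ) + 1)) := by
    intro n s hs x
    have h1 : ∫ t in Ioc 0 s, Real.exp (-l n * t) * mass μ q t x ≤
        ∫ t in Ioc 0 s, Real.exp ((|ω| + 1) * s) := by
      refine setIntegral_mono_on ((hq.res_integrableOn (hl1 n) x).mono_set Ioc_subset_Ioi_self)
        (by simp) measurableSet_Ioc fun t ht => ?_
      have e1 : Real.exp (-l n * t) ≤ Real.exp ((|ω| + 1) * s) := Real.exp_le_exp.2 (by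
        have := neg_abs_le (l n)
        have h3 := hlabs n
        exact mul_le_mul (by linarith) ht.2 ht.1.le (by positivity))
      have := mul_le_mul e1 (hq.mass_le_one ht.1 x) (hq.mass_nonneg _ _) (Real.exp_pos _).le
      linarith
    have h2 : ∫ t in Ioc 0 s, Real.exp ((|ω| + 1) * s) = s * Real.exp ((|ω| + 1) * s) := by
      simp [hs.le]
    rw [h2] at h1
    have h0 : 0 < s * Real.exp ((|ω| + 1) * s) := by positivity
    change _ / _ ≤ _
    rw [mul_one_div]
    exact div_le_div₀ h0.le h1 (by positivity) (hSn n).le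
  have hWlim : ∀ s > 0, ∀ x, Filter.Tendsto (fun n => W n s x) Filter.atTop (nhds 0) := by
    intro s hs x
    refine squeeze_zero (fun n => hW0 n s x) (fun n => hWle n s hs x) ?_
    simpa using hone.const_mul (s * Real.exp ((|ω| + 1) * s))
  obtain ⟨g, k, hk, hg⟩ := hq.weak_compact v hvm (fun n x => by
    rw [abs_of_nonneg (hv0 n x)]; exact hv1 n x)
  have hkt := hk.tendsto_atTop
  have hexp : ∀ s : ℝ, Filter.Tendsto (fun n => Real.exp (l (k n) * s)) Filter.atTop
      (nhds (Real.exp (ω * s))) := fun s =>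
    (Real.continuous_exp.tendsto _).comp ((hllim.comp hkt).mul_const s)
  have hvlim : ∀ x, Filter.Tendsto (fun n => v (k n) x) Filter.atTop
      (nhds (g x / Real.exp (ω * 1))) := by
    intro x
    have h1 := ((hg x).div (hexp 1) (Real.exp_pos _).ne').add ((hWlim 1 one_pos x).comp hkt)
    rw [add_zero] at h1
    refine h1.congr fun n => ?_
    simp only [Pi.div_apply, Function.comp]
    rw [heq _ 1 one_pos, mul_div_cancel_left₀ _ (Real.exp_pos _).ne']
    simp
  let V : X → ℝ := fun x => g x / Real.exp (ω * 1)
  have hVlim : ∀ x, Filter.Tendsto (fun n => v (k n) x) Filter.atTop (nhds (V x)) := hvlim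
  have hVm : Measurable V := measurable_of_tendsto_metrizable (fun n => hvm (k n))
    (tendsto_pi_nhds.2 hVlim)
  have hV0 : ∀ x, 0 ≤ V x := fun x => ge_of_tendsto' (hVlim x) fun n => hv0 _ _
  have hV1 : ∀ x, V x ≤ 1 := fun x => le_of_tendsto' (hVlim x) fun n => hv1 _ _
  refine ⟨V, hVm, hV0, hV1, ?_, ?_⟩
  · -- nontriviality
    obtain ⟨M, hM0, hM⟩ := hq.abs_bdd one_pos
    have hlim : Filter.Tendsto (fun n => ∫ x, v (k n) x ∂μ) Filter.atTop (nhds (∫ x, V x ∂μ)) :=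
      tendsto_integral_of_dominated_convergence (fun _ => 1)
        (fun n => (hvm _).aestronglyMeasurable) (integrable_const 1)
        (fun n => Filter.Eventually.of_forall fun x => by
          rw [Real.norm_of_nonneg (hv0 _ _)]; exact hv1 _ _)
        (Filter.Eventually.of_forall hVlim)
    have hlow : ∀ n, Real.exp (l n * 1) * (1 / 2 - W n 1 (x1 n)) ≤ M * ∫ x, v n x ∂μ := by
      intro n
      have h1 := heq n 1 one_pos (x1 n)
      have h2 : ∫ y, q 1 (x1 n) y * v n y ∂μ ≤ ∫ y, M * v n y ∂μ :=
        integral_mono (hq.int_qf one_pos _ (hvi n)) ((hvi n).const_mul M) fun y =>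
          mul_le_mul_of_nonneg_right ((le_abs_self _).trans (hM _ _)) (hv0 n y)
      rw [integral_const_mul, h1] at h2
      refine le_trans (mul_le_mul_of_nonneg_left ?_ (Real.exp_pos _).le) h2
      linarith [hvx n]
    have hW1 : Filter.Tendsto (fun n => W n 1 (x1 n)) Filter.atTop (nhds 0) := by
      refine squeeze_zero (fun n => hW0 n 1 _) (fun n => hWle n 1 one_pos _) ?_
      simpa using hone.const_mul (1 * Real.exp ((|ω| + 1) * 1))
    have h3 : Filter.Tendsto (fun n => Real.exp (l (k n) * 1) * (1 / 2 - W (k n) 1 (x1 (k n))))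
        Filter.atTop (nhds (Real.exp (ω * 1) * (1 / 2 - 0))) :=
      (hexp 1).mul ((hW1.comp hkt).const_sub _)
    have h4 := le_of_tendsto_of_tendsto' h3 (hlim.const_mul M) fun n => hlow (k n)
    have h5 : 0 < Real.exp (ω * 1) * (1 / 2 - 0) := by
      have := Real.exp_pos (ω * 1); nlinarith
    exact pos_of_mul_pos_right (h5.trans_le h4) hM0
  · intro t ht x
    obtain ⟨M, hM0, hM⟩ := hq.abs_bdd ht
    have hlim : Filter.Tendsto (fun n => ∫ y, q t x y * v (k n) y ∂μ) Filter.atTop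
        (nhds (∫ y, q t x y * V y ∂μ)) :=
      tendsto_integral_of_dominated_convergence (fun _ => M)
        (fun n => ((hq.meas_y t x).mul (hvm _)).aestronglyMeasurable) (integrable_const M)
        (fun n => Filter.Eventually.of_forall fun y => by
          rw [norm_mul, Real.norm_of_nonneg (hv0 _ _)]
          have := mul_le_mul (hM x y) (hv1 (k n) y) (hv0 _ _) hM0
          rwa [mul_one] at this)
        (Filter.Eventually.of_forall fun y => (hVlim y).const_mul _)
    have h2 := (hexp t).mul ((hVlim x).sub ((hWlim t ht x).comp hkt))
    rw [sub_zero] at h2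
    refine tendsto_nhds_unique hlim (h2.congr fun n => ?_)
    rw [heq _ t ht]; rfl

theorem spectrum_le (hq : SubMarkovKer μ q) {t : ℝ} (ht : 0 < t)
    (T : Lp ℝ 2 μ →L[ℝ] Lp ℝ 2 μ)
    (hT : ∀ f : Lp ℝ 2 μ, ∀ᵐ x ∂μ, T f x = ∫ y, q t x y * f y ∂μ) {k : ℝ}
    (hk : k ∈ spectrum ℝ T) : |k| ≤ Real.exp (omega μ q * t) := by
  obtain ⟨M, hM0, hM⟩ := hq.abs_bdd ht
  obtain ⟨R, hR⟩ : ∃ R, R = (measureUnivNNReal μ : ℝ) ^ (2 : ENNReal).toReal⁻¹ := ⟨_, rfl⟩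
  have hR0 : 0 ≤ R := by rw [hR]; positivity
  have hqL : ∀ x, MemLp (q t x) 2 μ := fun x =>
    MemLp.of_bound (hq.meas_y t x).aestronglyMeasurable M (Filter.Eventually.of_forall (hM x))
  have hqn : ∀ x, ‖(hqL x).toLp (q t x)‖ ≤ R * M := fun x => by
    rw [hR]
    refine Lp.norm_le_of_ae_bound hM0 ?_
    filter_upwards [(hqL x).coeFn_toLp] with y hy
    rw [hy]; exact hM x y
  have hb1 : ∀ f : Lp ℝ 2 μ, ∀ᵐ x ∂μ, |T f x| ≤ R * M * ‖f‖ := by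
    intro f
    filter_upwards [hT f] with x hx
    have e : ∫ y, q t x y * f y ∂μ = inner ℝ ((hqL x).toLp (q t x)) f := by
      rw [L2.inner_def]
      refine integral_congr_ae ?_
      filter_upwards [(hqL x).coeFn_toLp] with y h3
      rw [h3]; simp [mul_comm]
    rw [hx, e]
    exact (abs_real_inner_le_norm _ _).trans
      (mul_le_mul_of_nonneg_right (hqn x) (norm_nonneg f))
  have hfi : ∀ f : Lp ℝ 2 μ, Integrable f μ := fun f => (Lp.memLp f).integrable (by norm_num)
  have hb2 : ∀ n : ℕ, ∀ f : Lp ℝ 2 μ, ∀ᵐ x ∂μ,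
      |(T ^ (n + 2)) f x| ≤ R * M * ‖f‖ * mass μ q ((n + 1) * t) x := by
    have step : ∀ (g : Lp ℝ 2 μ) (F : X → ℝ), Integrable F μ → (∀ᵐ x ∂μ, |g x| ≤ F x) →
        ∀ᵐ x ∂μ, |T g x| ≤ ∫ y, q t x y * F y ∂μ := by
      intro g F hF hg
      filter_upwards [hT g] with x hx
      rw [hx]
      refine (abs_integral_le_integral_abs).trans ?_
      refine integral_mono_ae (hq.int_qf ht x (hfi g)).abs (hq.int_qf ht x hF) ?_
      filter_upwards [hg] with y hy
      rw [abs_mul, abs_of_nonneg (hq.nonneg t x y)]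
      exact mul_le_mul_of_nonneg_left hy (hq.nonneg t x y)
    intro n f
    induction n with
    | zero =>
      have h := step (T f) (fun _ => R * M * ‖f‖) (integrable_const _) (hb1 f)
      filter_upwards [h] with x hx
      rw [integral_mul_const] at hx
      simp only [zero_add, pow_two, Nat.cast_zero, one_mul]
      change |T (T f) x| ≤ _
      rw [mass]; linarith
    | succ n ih =>
      have hp : 0 < ((n : ℝ) + 1) * t := by positivity
      have h := step ((T ^ (n + 2)) f) _ ((hq.mass_int hp).const_mul (R * M * ‖f‖)) ih
      filter_upwards [h] with x hx
      rw [show n + 1 + 2 = (n + 2) + 1 by ring, pow_succ']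
      change |T ((T ^ (n + 2)) f) x| ≤ _
      refine hx.trans (le_of_eq ?_)
      rw [show (((n + 1 : ℕ) : ℝ) + 1) * t = t + ((n : ℝ) + 1) * t by push_cast; ring,
        hq.mass_add ht hp, ← integral_const_mul]
      congr 1; ext y; ring
  rcases eq_or_ne k 0 with rfl | hk0
  · simpa using (Real.exp_pos _).le
  have hkp : 0 < |k| := abs_pos.2 hk0
  have main : ∀ l, omega μ q < l → |k| ≤ Real.exp (l * t) := by
    intro l hl
    obtain ⟨C, hC0, hC⟩ := hq.growth hl
    have hop : ∀ n : ℕ, ‖T ^ (n + 2)‖ ≤ R * (R * M * C) * Real.exp (l * t) ^ (n + 1) := by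
      intro n
      refine ContinuousLinearMap.opNorm_le_bound _ (by positivity) fun f => ?_
      have hbd : ∀ᵐ x ∂μ, ‖(T ^ (n + 2)) f x‖ ≤
          R * M * ‖f‖ * (C * Real.exp (l * t) ^ (n + 1)) := by
        filter_upwards [hb2 n f] with x hx
        refine hx.trans (mul_le_mul_of_nonneg_left ?_ (by positivity))
        refine (hC _ (by positivity) x).trans (le_of_eq ?_)
        rw [← Real.exp_nat_mul]; push_cast; ring_nf
      have := Lp.norm_le_of_ae_bound (by positivity) hbd
      rw [← hR] at this
      refine this.trans (le_of_eq ?_)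
      ring
    refine le_of_geom (C := R * (R * M * C) * Real.exp (l * t) *
      ‖(1 : Lp ℝ 2 μ →L[ℝ] Lp ℝ 2 μ)‖ / |k| ^ 2) (Real.exp_pos _) fun n => ?_
    have h1 := spectrum.norm_le_norm_mul_of_mem (spectrum.pow_mem_pow T (n + 2) hk)
    rw [norm_pow, Real.norm_eq_abs] at h1
    have h2 := h1.trans (mul_le_mul_of_nonneg_right (hop n) (norm_nonneg _))
    rw [div_mul_eq_mul_div, le_div_iff₀ (by positivity), ← pow_add]
    refine h2.trans (le_of_eq ?_)
    ring
  have hcont : Filter.Tendsto (fun l : ℝ => Real.exp (l * t)) (nhdsWithin (omega μ q) (Ioi (omega μ q)))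
      (nhds (Real.exp (omega μ q * t))) :=
    ((by fun_prop : Continuous fun l : ℝ => Real.exp (l * t)).tendsto _).mono_left
      nhdsWithin_le_nhds
  exact ge_of_tendsto hcont (by filter_upwards [self_mem_nhdsWithin] with l hl using main l hl)

theorem mem_spectrum_of_eigen (T : Lp ℝ 2 μ →L[ℝ] Lp ℝ 2 μ) {k : ℝ} {f : Lp ℝ 2 μ}
    (hf : f ≠ 0) (h : T f = k • f) : k ∈ spectrum ℝ T := by
  rw [spectrum.mem_iff]
  rintro ⟨u, hu⟩
  apply hf
  have h1 : (u : Lp ℝ 2 μ →L[ℝ] Lp ℝ 2 μ) f = 0 := by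
    rw [hu, Algebra.algebraMap_eq_smul_one]
    simp [h]
  have h2 : ((u⁻¹ : (Lp ℝ 2 μ →L[ℝ] Lp ℝ 2 μ)ˣ) * (u : Lp ℝ 2 μ →L[ℝ] Lp ℝ 2 μ) :
      Lp ℝ 2 μ →L[ℝ] Lp ℝ 2 μ) f = 0 := by
    rw [mul_apply_eq_comp, h1, map_zero]
  rw [Units.inv_mul] at h2
  simpa using h2

end SubMarkovKer

/-- the kernel extended by zero -/
def extKer {E : Type*} (D : Set E) (p : ℝ → E → E → ℝ) (t : ℝ) (x y : E) : ℝ :=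
  (Set.Ioi (0 : ℝ) ×ˢ D ×ˢ D).indicator (fun z : ℝ × E × E => p z.1 z.2.1 z.2.2) (t, x, y)

theorem extKer_of_mem {E : Type*} {D : Set E} {p : ℝ → E → E → ℝ} {t : ℝ} {x y : E}
    (ht : 0 < t) (hx : x ∈ D) (hy : y ∈ D) : extKer D p t x y = p t x y := by
  rw [extKer, indicator_of_mem]
  exact ⟨ht, hx, hy⟩

theorem extKer_of_notMem_left {E : Type*} {D : Set E} {p : ℝ → E → E → ℝ} {t : ℝ} {x y : E}
    (hx : x ∉ D) : extKer D p t x y = 0 := by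
  rw [extKer, indicator_of_notMem]
  exact fun h => hx h.2.1

theorem extKer_of_notMem_right {E : Type*} {D : Set E} {p : ℝ → E → E → ℝ} {t : ℝ} {x y : E}
    (hy : y ∉ D) : extKer D p t x y = 0 := by
  rw [extKer, indicator_of_notMem]
  exact fun h => hy h.2.2

/-- existence of the principal eigenvalue and a bounded strictly positive
continuous principal eigenfunction for a strictly positive continuous sub-Markovian
kernel semigroup on a bounded open set; `e^{-λ₁ t}` is the spectral radius of `P_t`
on `L²(D; dx)`. -/
theorem principal_eigenfunction_exists (d : ℕ) (D : Set (EuclideanSpace ℝ (Fin d)))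
    (hD : IsOpen D) (hDbdd : Bornology.IsBounded D) (hDne : D.Nonempty)
    (p : ℝ → EuclideanSpace ℝ (Fin d) → EuclideanSpace ℝ (Fin d) → ℝ)
    (hcont : ContinuousOn
      (fun q : ℝ × EuclideanSpace ℝ (Fin d) × EuclideanSpace ℝ (Fin d) => p q.1 q.2.1 q.2.2)
      (Set.Ioi 0 ×ˢ D ×ˢ D))
    (hpos : ∀ t > 0, ∀ x ∈ D, ∀ y ∈ D, 0 < p t x y)
    (hbdd : ∀ t > 0, ∃ M, ∀ x ∈ D, ∀ y ∈ D, p t x y ≤ M)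
    (hsub : ∀ t > 0, ∀ x ∈ D, (∫ y in D, p t x y) ≤ 1)
    (hsemi : ∀ s > 0, ∀ t > 0, ∀ x ∈ D, ∀ y ∈ D,
      p (t + s) x y = ∫ z in D, p t x z * p s z y) :
    ∃ (lam : ℝ) (φ : EuclideanSpace ℝ (Fin d) → ℝ),
      ContinuousOn φ D ∧ (∀ x ∈ D, 0 < φ x) ∧ (∃ M, ∀ x ∈ D, φ x ≤ M) ∧
      (∫ x in D, φ x ^ 2) = 1 ∧
      (∀ t > 0, ∀ x ∈ D, (∫ y in D, p t x y * φ y) = Real.exp (-lam * t) * φ x) ∧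
      (∀ t > 0, ∀ T : Lp ℝ 2 (volume.restrict D) →L[ℝ] Lp ℝ 2 (volume.restrict D),
        (∀ f : Lp ℝ 2 (volume.restrict D),
          ∀ᵐ x ∂(volume.restrict D), T f x = ∫ y in D, p t x y * f y) →
        spectralRadius ℝ T = ENNReal.ofReal (Real.exp (-lam * t))) := by
  have hDm : MeasurableSet D := hD.measurableSet
  obtain ⟨μ, hμ⟩ : ∃ μ, μ = (volume : Measure (EuclideanSpace ℝ (Fin d))).restrict D := ⟨_, rfl⟩
  have hfin : IsFiniteMeasure μ := by
    rw [hμ]; exact isFiniteMeasure_restrict.2 hDbdd.measure_lt_top.ne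
  have hae : ∀ᵐ y ∂μ, y ∈ D := by rw [hμ]; exact ae_restrict_mem hDm
  set q := extKer D p with hqdef
  have hcongr : ∀ t > 0, ∀ x ∈ D, ∀ f : EuclideanSpace ℝ (Fin d) → ℝ,
      ∫ y in D, p t x y * f y = ∫ y, q t x y * f y ∂μ := by
    intro t ht x hx f
    rw [hμ]
    refine setIntegral_congr_fun hDm fun y hy => ?_
    simp only [hqdef, extKer_of_mem ht hx hy]
  have hq : SubMarkovKer μ q := by
    refine ⟨?_, ?_, ?_, ?_, ?_⟩
    · have hs : MeasurableSet (Set.Ioi (0 : ℝ) ×ˢ D ×ˢ D) :=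
        measurableSet_Ioi.prod (hDm.prod hDm)
      classical
      have := hcont.measurable_piecewise (g := 0) continuousOn_const hs
      rw [piecewise_eq_indicator] at this
      exact this
    · intro t x y
      refine indicator_nonneg (fun z hz => ?_) _
      exact (hpos _ hz.1 _ hz.2.1 _ hz.2.2).le
    · intro t ht
      obtain ⟨M, hM⟩ := hbdd t ht
      refine ⟨max M 0, fun x y => ?_⟩
      by_cases hx : x ∈ D
      · by_cases hy : y ∈ D
        · rw [hqdef, extKer_of_mem ht hx hy]
          exact (hM x hx y hy).trans (le_max_left _ _)
        · rw [hqdef, extKer_of_notMem_right hy]; exact le_max_right _ _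
      · rw [hqdef, extKer_of_notMem_left hx]; exact le_max_right _ _
    · intro t ht x
      by_cases hx : x ∈ D
      · have := hcongr t ht x hx (fun _ => 1)
        simp only [mul_one] at this
        rw [← this]; exact hsub t ht x hx
      · simp [hqdef, extKer_of_notMem_left hx]
    · intro t ht s hs x y
      by_cases hx : x ∈ D
      · by_cases hy : y ∈ D
        · rw [hqdef, extKer_of_mem (by linarith : 0 < t + s) hx hy, hsemi s hs t ht x hx y hy, hμ]
          refine setIntegral_congr_fun hDm fun z hz => ?_
          simp only [extKer_of_mem ht hx hz, extKer_of_mem hs hz hy]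
        · simp [hqdef, extKer_of_notMem_right hy]
      · simp [hqdef, extKer_of_notMem_left hx]
  have hbelow : BddBelow (SubMarkovKer.expSet μ q) := by
    obtain ⟨x0, hx0⟩ := hDne
    obtain ⟨r, hr, hrD⟩ := Metric.nhds_basis_closedBall.mem_iff.1 (hD.mem_nhds hx0)
    have hK : IsCompact (closedBall x0 r ×ˢ closedBall x0 r) :=
      (isCompact_closedBall x0 r).prod (isCompact_closedBall x0 r)
    have hKne : (closedBall x0 r ×ˢ closedBall x0 r).Nonempty :=
      ⟨(x0, x0), mem_closedBall_self hr.le, mem_closedBall_self hr.le⟩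
    have hc1 : ContinuousOn (fun w : EuclideanSpace ℝ (Fin d) × EuclideanSpace ℝ (Fin d) =>
        p 1 w.1 w.2) (closedBall x0 r ×ˢ closedBall x0 r) :=
      hcont.comp (f := fun w : EuclideanSpace ℝ (Fin d) × EuclideanSpace ℝ (Fin d) =>
        ((1 : ℝ), w.1, w.2)) (by fun_prop)
        fun w hw => ⟨mem_Ioi.2 one_pos, hrD hw.1, hrD hw.2⟩
    obtain ⟨w, hw, hmin⟩ := hK.exists_isMinOn hKne hc1
    refine hq.expSet_bddBelow (B := closedBall x0 r) isClosed_closedBall.measurableSet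
      (c := p 1 w.1 w.2) (hpos 1 one_pos _ (hrD hw.1) _ (hrD hw.2)) ?_ ?_
    · intro x hx y hy
      rw [hqdef, extKer_of_mem one_pos (hrD hx) (hrD hy)]
      exact hmin (show (x, y) ∈ _ from ⟨hx, hy⟩)
    · rw [hμ, measureReal_restrict_apply isClosed_closedBall.measurableSet,
        inter_eq_left.2 hrD]
      exact ENNReal.toReal_pos (measure_closedBall_pos _ _ hr).ne' measure_closedBall_lt_top.ne
  obtain ⟨v, hvm, hv0, hv1, hvpos, hveig⟩ := hq.exists_eigen hbelow
  set ω := SubMarkovKer.omega μ q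
  have hvi : Integrable v μ := SubMarkovKer.bdd_fun_integrable hvm (M := 1) fun x => by
    rw [abs_of_nonneg (hv0 x)]; exact hv1 x
  have hvx : ∀ x, v x = Real.exp (-ω) * ∫ y, q 1 x y * v y ∂μ := fun x => by
    rw [hveig 1 one_pos x, ← mul_assoc, ← Real.exp_add]; simp
  have hvD : ∀ x ∈ D, 0 < v x := by
    intro x hx
    rw [hvx x]
    refine mul_pos (Real.exp_pos _) ?_
    rw [integral_pos_iff_support_of_nonneg (fun y => mul_nonneg (hq.nonneg 1 x y) (hv0 y))
      (hq.int_qf one_pos x hvi)]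
    rw [integral_pos_iff_support_of_nonneg hv0 hvi] at hvpos
    refine hvpos.trans_le (measure_mono_ae ?_)
    filter_upwards [hae] with y hy hyv
    refine mul_ne_zero ?_ hyv
    rw [hqdef, extKer_of_mem one_pos hx hy]
    exact (hpos 1 one_pos x hx y hy).ne'
  have hvc : ContinuousOn v D := by
    have h1 : ContinuousOn (fun x => ∫ y, q 1 x y * v y ∂μ) D := by
      obtain ⟨M, hM0, hM⟩ := hq.abs_bdd one_pos
      refine continuousOn_of_dominated (bound := fun _ => M)
        (fun x _ => ((hq.meas_y 1 x).mul hvm).aestronglyMeasurable)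
        (fun x _ => Filter.Eventually.of_forall fun y => ?_) (integrable_const M) ?_
      · rw [norm_mul, Real.norm_of_nonneg (hv0 _)]
        have := mul_le_mul (hM x y) (hv1 y) (hv0 _) hM0
        rwa [mul_one] at this
      · filter_upwards [hae] with y hy
        have h2 : ContinuousOn (fun x => p 1 x y) D :=
          hcont.comp (f := fun x => ((1 : ℝ), x, y)) (by fun_prop)
            fun x hx => ⟨mem_Ioi.2 one_pos, hx, hy⟩
        refine (h2.congr fun x hx => ?_).mul continuousOn_const
        exact extKer_of_mem one_pos hx hy
    exact (continuousOn_const.mul h1).congr fun x _ => hvx x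
  have hv2i : Integrable (fun x => v x ^ 2) μ :=
    SubMarkovKer.bdd_fun_integrable (hvm.pow_const 2) (M := 1) fun x => by
      rw [abs_of_nonneg (by positivity)]; exact pow_le_one₀ (hv0 x) (hv1 x)
  have hI : 0 < ∫ x, v x ^ 2 ∂μ := by
    rw [integral_pos_iff_support_of_nonneg (fun x => by positivity) hv2i]
    rw [integral_pos_iff_support_of_nonneg hv0 hvi] at hvpos
    refine hvpos.trans_le (measure_mono fun x hx => ?_)
    exact pow_ne_zero 2 hx
  obtain ⟨s, hs⟩ : ∃ s, s = Real.sqrt (∫ x, v x ^ 2 ∂μ) := ⟨_, rfl⟩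
  have hs0 : 0 < s := by rw [hs]; exact Real.sqrt_pos.2 hI
  have hs2 : s ^ 2 = ∫ x, v x ^ 2 ∂μ := by rw [hs]; exact Real.sq_sqrt hI.le
  have hlam : ∀ t : ℝ, - -ω * t = ω * t := fun t => by rw [neg_neg]
  refine ⟨-ω, fun x => v x / s, hvc.div_const s, fun x hx => div_pos (hvD x hx) hs0,
    ⟨1 / s, fun x _ => div_le_div_of_nonneg_right (hv1 x) hs0.le⟩, ?_, ?_, ?_⟩
  · rw [← hμ]
    simp_rw [div_pow]
    rw [integral_div, ← hs2, div_self (by positivity)]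
  · intro t ht x hx
    rw [hcongr t ht x hx, hlam, ← mul_div_assoc, ← hveig t ht x, ← integral_div]
    congr 1; ext y; ring
  · intro t ht T hT
    rw [hlam]
    subst hμ
    have hT' : ∀ f : Lp ℝ 2 (volume.restrict D), ∀ᵐ x ∂(volume.restrict D),
        T f x = ∫ y, q t x y * f y ∂(volume.restrict D) := by
      intro f
      filter_upwards [hT f, hae] with x hx hxD
      rw [hx, hcongr t ht x hxD]
    refine le_antisymm (iSup₂_le fun k hk => ?_) ?_
    · have := hq.spectrum_le ht T hT' hk
      rw [← enorm_eq_nnnorm, ← ofReal_norm]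
      exact ENNReal.ofReal_le_ofReal this
    · have hvL : MemLp v 2 (volume.restrict D) :=
        MemLp.of_bound hvm.aestronglyMeasurable 1 (Filter.Eventually.of_forall fun x => by
          rw [Real.norm_of_nonneg (hv0 x)]; exact hv1 x)
      have hne : hvL.toLp v ≠ 0 := by
        intro h0
        have h1 : v =ᵐ[volume.restrict D] 0 := by
          have h2 := hvL.coeFn_toLp
          rw [h0] at h2
          exact h2.symm.trans (Lp.coeFn_zero _ _ _)
        rw [integral_congr_ae h1] at hvpos
        simp at hvpos
      have heig : T (hvL.toLp v) = Real.exp (ω * t) • hvL.toLp v := by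
        apply Lp.ext
        filter_upwards [hT' (hvL.toLp v), Lp.coeFn_smul (Real.exp (ω * t)) (hvL.toLp v),
          hvL.coeFn_toLp] with x h1 h2 h3
        rw [h1, h2, Pi.smul_apply, h3, smul_eq_mul, ← hveig t ht x]
        refine integral_congr_ae ?_
        filter_upwards [hvL.coeFn_toLp] with y hy
        rw [hy]
      have hmem := SubMarkovKer.mem_spectrum_of_eigen T hne heig
      refine le_trans (le_of_eq ?_) (le_iSup₂ (f := fun (k : ℝ) (_ : k ∈ spectrum ℝ T) =>
        (‖k‖₊ : ENNReal)) _ hmem)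
      rw [← enorm_eq_nnnorm, ← ofReal_norm, Real.norm_of_nonneg (Real.exp_pos _).le]
end
end

section
/- Let d ≥ 1 and α > 0. Then there exists a constant c = c(d, α) > 0 such that for all x, y ∈ ℝ^d: ∫_{ℝ^d} min(1, |x−z|^{−(d+α)})·min(1, |z−y|^{−(d+α)}) dz ≤ c·min(1, |x−y|^{−(d+α)}). -/
open MeasureTheory Metric Set

noncomputable section

theorem conv_aux1 (r : ℝ) (hr : 0 < r) (t : ℝ) (ht : 0 ≤ t) :
    (max 1 t) ^ (-r) ≤ 2 ^ r * (1 + t) ^ (-r) := by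
  have h2 : (2 : ℝ) ^ r = (1 / 2 : ℝ) ^ (-r) := by
    rw [one_div, Real.inv_rpow (by norm_num), Real.rpow_neg (by norm_num), inv_inv]
  rw [h2, ← Real.mul_rpow (by norm_num) (by positivity)]
  apply Real.rpow_le_rpow_of_nonpos (by positivity) _ (by linarith)
  have h3 := le_max_left 1 t
  have h4 := le_max_right 1 t
  linarith

theorem conv_aux2 (r : ℝ) (hr : 0 < r) (D a b : ℝ) (hD : 0 < D) (ha : 0 < a) (hb : 0 < b)
    (h : D ≤ a + b) :
    a ^ (-r) * b ^ (-r) ≤ 2 ^ r * D ^ (-r) * (a ^ (-r) + b ^ (-r)) := by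
  have h2 : (2 : ℝ) ^ r = (1 / 2 : ℝ) ^ (-r) := by
    rw [one_div, Real.inv_rpow (by norm_num), Real.rpow_neg (by norm_num), inv_inv]
  rw [h2, ← Real.mul_rpow (x := 1 / 2) (y := D) (by norm_num) hD.le]
  have hA : 0 < a ^ (-r) := by positivity
  have hB : 0 < b ^ (-r) := by positivity
  have hC : 0 < (1 / 2 * D) ^ (-r) := by positivity
  rcases le_total a b with hab | hab
  · have := Real.rpow_le_rpow_of_nonpos (x := 1 / 2 * D) (y := b) (z := -r)
      (by positivity) (by linarith) (by linarith)
    nlinarith [mul_pos hC hB, mul_le_mul_of_nonneg_left this hA.le]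
  · have := Real.rpow_le_rpow_of_nonpos (x := 1 / 2 * D) (y := a) (z := -r)
      (by positivity) (by linarith) (by linarith)
    nlinarith [mul_pos hC hA, mul_le_mul_of_nonneg_left this hB.le]

/-- the convolution inequality
`∫ min(1,|x-z|^{-(d+α)}) min(1,|z-y|^{-(d+α)}) dz ≤ c min(1,|x-y|^{-(d+α)})`.
Here `min(1, r^{-(d+α)})` is encoded as `(max 1 r)^{-(d+α)}`, which agrees with it for all
`r > 0` and gives the correct value `1` at `r = 0`. -/
theorem convolution_inequality (d : ℕ) (hd : 1 ≤ d) (α : ℝ) (hα : 0 < α) :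
    ∃ c > 0, ∀ x y : EuclideanSpace ℝ (Fin d),
      (∫ z, max 1 ‖x - z‖ ^ (-((d : ℝ) + α)) * max 1 ‖z - y‖ ^ (-((d : ℝ) + α)))
        ≤ c * max 1 ‖x - y‖ ^ (-((d : ℝ) + α)) := by
  set r : ℝ := (d : ℝ) + α with hrdef
  have hr : 0 < r := by positivity
  let f : EuclideanSpace ℝ (Fin d) → ℝ := fun z => (1 + ‖z‖) ^ (-r)
  have hf : Integrable f := by
    apply integrable_one_add_norm
    rw [finrank_euclideanSpace_fin]
    linarith
  have hf0 : ∀ z, 0 ≤ f z := fun z => by positivity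
  have hI : 0 ≤ ∫ z, f z := integral_nonneg hf0
  refine ⟨2 ^ r * 2 ^ r * (2 * ∫ z, f z) + 1, by positivity, fun x y => ?_⟩
  have hD : 0 < max 1 ‖x - y‖ := by positivity
  have hDr : 0 < max 1 ‖x - y‖ ^ (-r) := by positivity
  have h1 : Integrable (fun z => f (x - z)) := hf.comp_sub_left x
  have h2 : Integrable (fun z => f (z - y)) := hf.comp_sub_right y
  have key : (∫ z, max 1 ‖x - z‖ ^ (-r) * max 1 ‖z - y‖ ^ (-r)) ≤
      ∫ z, (2 ^ r * max 1 ‖x - y‖ ^ (-r) * 2 ^ r) * (f (x - z) + f (z - y)) := by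
    apply integral_mono_of_nonneg
    · exact Filter.Eventually.of_forall fun z => by positivity
    · exact (h1.add h2).const_mul _
    · refine Filter.Eventually.of_forall fun z => ?_
      have htri : max 1 ‖x - y‖ ≤ max 1 ‖x - z‖ + max 1 ‖z - y‖ := by
        have := norm_sub_le_norm_sub_add_norm_sub x z y
        have a1 := le_max_left 1 ‖x - z‖
        have a2 := le_max_right 1 ‖x - z‖
        have a3 := le_max_left 1 ‖z - y‖
        have a4 := le_max_right 1 ‖z - y‖
        apply max_le <;> linarith
      have hp := conv_aux2 r hr _ _ _ hD (by positivity) (by positivity) htri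
      have q1 := conv_aux1 r hr ‖x - z‖ (norm_nonneg _)
      have q2 := conv_aux1 r hr ‖z - y‖ (norm_nonneg _)
      refine hp.trans ?_
      beta_reduce
      rw [mul_assoc (2 ^ r * max 1 ‖x - y‖ ^ (-r))]
      apply mul_le_mul_of_nonneg_left _ (by positivity)
      rw [mul_add]
      exact add_le_add q1 q2
  refine key.trans ?_
  rw [integral_const_mul, integral_add h1 h2, integral_sub_left_eq_self f volume x,
    integral_sub_right_eq_self f y]
  nlinarith
end
end
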